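/- arXiv:1409.7482 — 7 statements merged into one kernel-verified Lean document; each statement's English description precedes it below -/
import Mathlib

section
/- Let X_1, X_2, … be i.i.d. ℕ-valued random variables with E[(1+δ)^{X_1}] < ∞ for some δ > 0, mean m = E(X_1) > 0 and dispersion γ = Var(X_1) − E(X_1) > 0, and let C(t) = log E[(1+t)^{X_1}]. Fix μ ≥ γ and suppose that for each n there exists an ℕ-valued random variable Z_n whose FCGF satisfies log E[(1+t)^{Z_n}] = n·C(n^{-1/2} t) − (nm − n^{1/2} μ)·n^{-1/2} t for all t in a neighborhood of 0. Then Z_n converges in distribution to the Hermite distribution PT₀(μ, γ), i.e., to the law of P + 2Q where P ~ Poisson(μ − γ) and Q ~ Poisson(γ/2) are independent. -/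
/-!
The Hermite law has probability generating function `exp (μ (z - 1) + (γ / 2) (z - 1) ^ 2)`
(`hasSum_hermitePMF_mul_pow`), and pointwise convergence of probability generating functions on
`(0, 1)` implies convergence of the probabilities (`tendsto_coeff_of_tendsto_pgf`). So it suffices
to find the limit of `fcgf (Z n) t` for each `t ∈ (-1, 0)`.

The formula for `fcgf (Z n)` is only given on a neighbourhood of `0` that may shrink with `n`. Both
sides are real-analytic on `(-1, 0)`, where every series involved converges to a positive number,
so the formula holds on this whole interval (`fcgf_eq_of_near_zero`). With `s = t / √n` it reads
`fcgf (Z n) t = μ t + n (C s - m s)`, and `C s = m s + (γ / 2) s ^ 2 + o(s ^ 2)` as `s ↑ 0`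
(`tendsto_fcgf_quadratic`) gives the limit `μ t + (γ / 2) t ^ 2`. Only arguments `t < 0` occur, so
the convergence of the series of `Z n` at points beyond `1` plays no role.
-/

open Filter

/-- The Poisson pmf with mean `μ`. -/
noncomputable def poissonPMF (μ : ℝ) (k : ℕ) : ℝ := Real.exp (-μ) * μ ^ k / (Nat.factorial k)

/-- The pmf of the Hermite distribution `PT₀(μ, γ)`: the law of `P + 2Q` where
`P ~ Poisson(μ - γ)` and `Q ~ Poisson(γ/2)` are independent. -/
noncomputable def hermitePMF (μ γ : ℝ) (x : ℕ) : ℝ :=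
  ∑' q : ℕ × ℕ,
    if q.1 + 2 * q.2 = x then poissonPMF (μ - γ) q.1 * poissonPMF (γ / 2) q.2 else 0

/-- The factorial cumulant generating function `C(t) = log E[(1+t)^X]` of the pmf `p`. -/
noncomputable def fcgf (p : ℕ → ℝ) (t : ℝ) : ℝ := Real.log (∑' k : ℕ, p k * (1 + t) ^ k)

/-- Mean of an `ℕ`-valued distribution given by the pmf `p`. -/
noncomputable def pmean (p : ℕ → ℝ) : ℝ := ∑' k : ℕ, p k * (k : ℝ)

/-- Variance of an `ℕ`-valued distribution given by the pmf `p`. -/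
noncomputable def pvar (p : ℕ → ℝ) : ℝ := (∑' k : ℕ, p k * (k : ℝ) ^ 2) - (pmean p) ^ 2

/-! ### Probability generating functions and analytic continuation -/

lemma summable_pgf {q : ℕ → ℝ} (h0 : ∀ k, 0 ≤ q k) (h1 : HasSum q 1) {z : ℝ}
    (hz0 : 0 ≤ z) (hz1 : z ≤ 1) : Summable (fun k => q k * z ^ k) :=
  h1.summable.of_nonneg_of_le (fun k => mul_nonneg (h0 k) (pow_nonneg hz0 k))
    fun k => mul_le_of_le_one_right (h0 k) (pow_le_one₀ hz0 hz1)

lemma le_one_of_hasSum {q : ℕ → ℝ} (h0 : ∀ k, 0 ≤ q k) (h1 : HasSum q 1) (k : ℕ) : q k ≤ 1 :=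
  le_hasSum h1 k fun j _ => h0 j

lemma pgf_pos {q : ℕ → ℝ} (h0 : ∀ k, 0 ≤ q k) (h1 : HasSum q 1) {z : ℝ}
    (hz0 : 0 < z) (hz1 : z ≤ 1) : 0 < ∑' k, q k * z ^ k := by
  have hex : ∃ k, q k ≠ 0 := by
    by_contra! hall
    have hq : q = fun _ => 0 := funext hall
    rw [hq] at h1
    exact zero_ne_one (hasSum_zero.unique h1)
  obtain ⟨k, hk⟩ := hex
  exact (summable_pgf h0 h1 hz0.le hz1).tsum_pos
    (fun j => mul_nonneg (h0 j) (pow_nonneg hz0.le j)) k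
    (mul_pos (lt_of_le_of_ne (h0 k) hk.symm) (pow_pos hz0 k))

lemma analyticAt_pgf {q : ℕ → ℝ} (h0 : ∀ k, 0 ≤ q k) (h1 : HasSum q 1) {z : ℝ}
    (hz0 : 0 < z) (hz1 : z < 1) : AnalyticAt ℝ (fun z => ∑' k, q k * z ^ k) z := by
  set P := FormalMultilinearSeries.ofScalars ℝ q with hP
  have hr : ((1 : NNReal) : ENNReal) ≤ P.radius := by
    refine P.le_radius_of_bound 1 fun n => ?_
    rw [hP, FormalMultilinearSeries.ofScalars_norm, Real.norm_of_nonneg (h0 n)]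
    simpa using le_one_of_hasSum h0 h1 n
  have hs : P.sum = fun z => ∑' k, q k * z ^ k := by
    funext z
    exact FormalMultilinearSeries.ofScalars_sum_eq q z
  have hball := P.hasFPowerSeriesOnBall (lt_of_lt_of_le (by simp) hr)
  rw [hs] at hball
  refine hball.analyticOnNhd z (Metric.eball_subset_eball hr ?_)
  rw [Metric.mem_eball, edist_dist, Real.dist_eq, sub_zero, abs_of_pos hz0]
  simpa using hz1

lemma analyticAt_fcgf {q : ℕ → ℝ} (h0 : ∀ k, 0 ≤ q k) (h1 : HasSum q 1) {t : ℝ}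
    (ht0 : -1 < t) (ht1 : t < 0) : AnalyticAt ℝ (fcgf q) t := by
  have hA : AnalyticAt ℝ (fun t => ∑' k, q k * (1 + t) ^ k) t :=
    AnalyticAt.fun_comp (g := fun z => ∑' k, q k * z ^ k) (f := fun t : ℝ => 1 + t)
      (analyticAt_pgf h0 h1 (by linarith) (by linarith)) (by fun_prop)
  exact hA.log (pgf_pos h0 h1 (by linarith) (by linarith))

/-- The identity between factorial cumulant generating functions, assumed only near `0`, holds on
all of `(-1, 0)` because both sides are real-analytic there. -/
lemma fcgf_eq_of_near_zero {p q : ℕ → ℝ} (hp0 : ∀ k, 0 ≤ p k) (hp1 : HasSum p 1)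
    (hq0 : ∀ k, 0 ≤ q k) (hq1 : HasSum q 1) {n : ℕ} (hn : 1 ≤ n) (c : ℝ)
    (h : ∃ ε > 0, ∀ t : ℝ, |t| < ε →
      fcgf q t = (n : ℝ) * fcgf p (t / Real.sqrt n) - c * (t / Real.sqrt n))
    {t : ℝ} (ht0 : -1 < t) (ht1 : t < 0) :
    fcgf q t = (n : ℝ) * fcgf p (t / Real.sqrt n) - c * (t / Real.sqrt n) := by
  obtain ⟨ε, hε, h⟩ := h
  have hs : 1 ≤ Real.sqrt n := Real.one_le_sqrt.2 (by exact_mod_cast hn)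
  have hL : AnalyticOnNhd ℝ (fcgf q) (Set.Ioo (-1) 0) :=
    fun t ht => analyticAt_fcgf hq0 hq1 ht.1 ht.2
  have hR : AnalyticOnNhd ℝ (fun t : ℝ => (n : ℝ) * fcgf p (t / Real.sqrt n)
      - c * (t / Real.sqrt n)) (Set.Ioo (-1) 0) := by
    intro t ht
    have hlin : AnalyticAt ℝ (fun t : ℝ => t / Real.sqrt n) t :=
      analyticAt_id.div analyticAt_const (by positivity)
    have h1 : -1 < t / Real.sqrt n := by
      rw [lt_div_iff₀ (by positivity)]
      linarith [ht.1]
    have h2 : t / Real.sqrt n < 0 := div_neg_of_neg_of_pos ht.2 (by positivity)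
    have hC : AnalyticAt ℝ (fun t : ℝ => fcgf p (t / Real.sqrt n)) t :=
      AnalyticAt.fun_comp (g := fcgf p) (f := fun t : ℝ => t / Real.sqrt n)
        (analyticAt_fcgf hp0 hp1 h1 h2) hlin
    exact (analyticAt_const.mul hC).sub (analyticAt_const.mul hlin)
  have hmin : 0 < min ε 1 := lt_min hε one_pos
  have hz : -(min ε 1) / 2 ∈ Set.Ioo (-1 : ℝ) 0 :=
    ⟨by linarith [min_le_right ε 1], by linarith⟩
  refine hL.eqOn_of_preconnected_of_eventuallyEq hR isPreconnected_Ioo hz ?_ ⟨ht0, ht1⟩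
  have hnear : ∀ᶠ t in nhds (-(min ε 1) / 2), |t| < ε := by
    refine (continuous_abs.tendsto _).eventually_lt_const ?_
    rw [abs_of_neg hz.2]
    linarith [min_le_left ε 1]
  filter_upwards [hnear] with t ht using h t ht

/-! ### Second-order expansion of the factorial cumulant generating function -/

/-- Second-order binomial expansion with a remainder that is polynomial in the exponent, so that it
can be summed against a law with finite third moment. -/
lemma abs_one_add_pow_sub_le {s : ℝ} (hs0 : -1 ≤ s) (hs1 : s ≤ 0) (k : ℕ) :
    |(1 + s) ^ k - (1 + k * s + (k : ℝ) * (k - 1) / 2 * s ^ 2)| ≤ (k : ℝ) ^ 3 * |s| ^ 3 := by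
  induction k with
  | zero => simp
  | succ k ih =>
    have hk : (0 : ℝ) ≤ k := k.cast_nonneg
    have hkk : (0 : ℝ) ≤ (k : ℝ) * (k - 1) := by
      rcases k with _ | k
      · simp
      · push_cast; ring_nf; positivity
    have heq : (1 + s) ^ (k + 1) - (1 + ((k + 1 : ℕ) : ℝ) * s
          + ((k + 1 : ℕ) : ℝ) * ((k + 1 : ℕ) - 1) / 2 * s ^ 2)
        = (1 + s) * ((1 + s) ^ k - (1 + k * s + (k : ℝ) * (k - 1) / 2 * s ^ 2))
          + (k : ℝ) * (k - 1) / 2 * s ^ 3 := by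
      push_cast; ring
    rw [heq]
    refine (abs_add_le _ _).trans ?_
    rw [abs_mul, abs_mul, abs_pow, abs_of_nonneg (show 0 ≤ 1 + s by linarith),
      abs_of_nonneg (show 0 ≤ (k : ℝ) * (k - 1) / 2 by linarith)]
    have h3 : 0 ≤ |s| ^ 3 := by positivity
    have h1 := mul_le_of_le_one_left (abs_nonneg
      ((1 + s) ^ k - (1 + k * s + (k : ℝ) * (k - 1) / 2 * s ^ 2))) (show 1 + s ≤ 1 by linarith)
    have h2 : (k : ℝ) ^ 3 + (k : ℝ) * (k - 1) / 2 ≤ ((k + 1 : ℕ) : ℝ) ^ 3 := by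
      push_cast; nlinarith
    nlinarith [mul_le_mul_of_nonneg_right h2 h3]

lemma summable_moment {p : ℕ → ℝ} (hp0 : ∀ k, 0 ≤ p k) {δ : ℝ} (hδ : 0 < δ)
    (hmom : Summable (fun k : ℕ => p k * (1 + δ) ^ k)) (j : ℕ) :
    Summable (fun k : ℕ => p k * (k : ℝ) ^ j) := by
  have ho := isLittleO_pow_const_const_pow_of_one_lt (R := ℝ) j (show 1 < 1 + δ by linarith)
  refine Summable.of_norm_bounded_eventually_nat hmom ?_
  filter_upwards [ho.bound one_pos] with k hk
  rw [one_mul, Real.norm_of_nonneg (show 0 ≤ (1 + δ) ^ k by positivity)] at hk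
  rw [norm_mul, Real.norm_of_nonneg (hp0 k)]
  exact mul_le_mul_of_nonneg_left hk (hp0 k)

/-- The generating function satisfies `E (1+s)^X = 1 + m s + (γ + m²)/2 · s² + O(|s|³)` for
`s ∈ [-1, 0]`, since `E X(X-1) = Var X - E X + (E X)² = γ + m²`. -/
lemma exists_pgf_taylor {p : ℕ → ℝ} (hp0 : ∀ k, 0 ≤ p k) (hp1 : HasSum p 1)
    {δ : ℝ} (hδ : 0 < δ) (hmom : Summable (fun k : ℕ => p k * (1 + δ) ^ k))
    {m γ : ℝ} (hmean : pmean p = m) (hdisp : pvar p - pmean p = γ) :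
    ∃ K : ℝ, ∀ s : ℝ, -1 ≤ s → s ≤ 0 →
      |(∑' k : ℕ, p k * (1 + s) ^ k) - (1 + m * s + (γ + m ^ 2) / 2 * s ^ 2)| ≤ K * |s| ^ 3 := by
  have hM1 : HasSum (fun k : ℕ => p k * (k : ℝ)) m := by
    have h := (summable_moment hp0 hδ hmom 1).hasSum
    simp only [pow_one] at h
    rwa [← hmean]
  have hM2 : HasSum (fun k : ℕ => p k * (k : ℝ) ^ 2) (γ + m + m ^ 2) := by
    have h := (summable_moment hp0 hδ hmom 2).hasSum
    have he : (∑' k : ℕ, p k * (k : ℝ) ^ 2) = γ + m + m ^ 2 := by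
      rw [← hdisp, ← hmean, pvar]; ring
    rwa [he] at h
  have hM3 := (summable_moment hp0 hδ hmom 3).hasSum
  refine ⟨∑' k : ℕ, p k * (k : ℝ) ^ 3, fun s hs0 hs1 => ?_⟩
  have hG := (summable_pgf hp0 hp1 (z := 1 + s) (by linarith) (by linarith)).hasSum
  have hT : HasSum (fun k : ℕ => p k * (1 + k * s + (k : ℝ) * (k - 1) / 2 * s ^ 2))
      (1 + m * s + (γ + m ^ 2) / 2 * s ^ 2) := by
    have h := (hp1.add (hM1.mul_right s)).add ((hM2.sub hM1).mul_right (s ^ 2 / 2))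
    convert h using 1
    · funext k; ring
    · ring
  rw [← (hG.sub hT).tsum_eq, ← Real.norm_eq_abs]
  refine tsum_of_norm_bounded (hM3.mul_right (|s| ^ 3)) fun k => ?_
  rw [← mul_sub, norm_mul, Real.norm_of_nonneg (hp0 k), mul_assoc]
  exact mul_le_mul_of_nonneg_left (abs_one_add_pow_sub_le hs0 hs1 k) (hp0 k)

lemma tendsto_log_one_add_sub :
    Tendsto (fun u : ℝ => (Real.log (1 + u) - u) / u ^ 2) (nhdsWithin 0 {0}ᶜ)
      (nhds (-1 / 2)) := by
  have hb : Tendsto (fun u : ℝ => |u| / (1 - |u|)) (nhdsWithin 0 {0}ᶜ) (nhds 0) := by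
    have hc : ContinuousAt (fun u : ℝ => |u| / (1 - |u|)) 0 := by
      refine ContinuousAt.div (by fun_prop) (by fun_prop) (by simp)
    have h := hc.tendsto
    simp only [abs_zero, zero_div] at h
    exact h.mono_left nhdsWithin_le_nhds
  rw [tendsto_iff_dist_tendsto_zero]
  refine squeeze_zero' (Eventually.of_forall fun _ => dist_nonneg) ?_ hb
  have h1 : ∀ᶠ u : ℝ in nhdsWithin 0 {0}ᶜ, |u| < 1 :=
    nhdsWithin_le_nhds ((continuous_abs.tendsto (0 : ℝ)).eventually_lt_const (by simp))
  filter_upwards [h1, self_mem_nhdsWithin] with u hu hu0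
  have hu0 : u ≠ 0 := hu0
  have hpos : 0 < 1 - |u| := by linarith
  have h := Real.abs_log_sub_add_sum_range_le (x := -u) (by rwa [abs_neg]) 2
  simp only [Finset.sum_range_succ, Finset.sum_range_zero, abs_neg] at h
  norm_num at h
  have he : (Real.log (1 + u) - u) / u ^ 2 - -1 / 2
      = (-u + u ^ 2 / 2 + Real.log (1 + u)) / u ^ 2 := by
    field_simp
    ring
  rw [Real.dist_eq, he, abs_div, abs_of_pos (show 0 < u ^ 2 by positivity),
    div_le_iff₀ (by positivity)]
  refine h.trans (le_of_eq ?_)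
  rw [← sq_abs u]
  field_simp

/-- The factorial cumulant expansion `C(s) = m s + (γ/2) s² + o(s²)` as `s ↑ 0`. -/
lemma tendsto_fcgf_quadratic {p : ℕ → ℝ} (hp0 : ∀ k, 0 ≤ p k) (hp1 : HasSum p 1)
    {δ : ℝ} (hδ : 0 < δ) (hmom : Summable (fun k : ℕ => p k * (1 + δ) ^ k))
    {m γ : ℝ} (hm : 0 < m) (hmean : pmean p = m) (hdisp : pvar p - pmean p = γ) :
    Tendsto (fun s => (fcgf p s - m * s) / s ^ 2) (nhdsWithin 0 (Set.Iio 0)) (nhds (γ / 2)) := by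
  obtain ⟨K, hK⟩ := exists_pgf_taylor hp0 hp1 hδ hmom hmean hdisp
  -- With `u = E (1+s)^X - 1` one has `u / s → m` and `(u - m s) / s² → (γ + m²) / 2`, and then
  -- `(C s - m s) / s² = (log (1 + u) - u) / u² · (u / s)² + (u - m s) / s²`.
  set u : ℝ → ℝ := fun s => (∑' k : ℕ, p k * (1 + s) ^ k) - 1 with hu
  have hid : Tendsto (fun s : ℝ => s) (nhdsWithin 0 (Set.Iio 0)) (nhds 0) :=
    tendsto_id.mono_left nhdsWithin_le_nhds
  have hneg : ∀ᶠ s : ℝ in nhdsWithin 0 (Set.Iio 0), -1 < s ∧ s < 0 :=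
    (hid.eventually_const_lt (by norm_num)).and self_mem_nhdsWithin
  have h2 : Tendsto (fun s => (u s - m * s) / s ^ 2) (nhdsWithin 0 (Set.Iio 0))
      (nhds ((γ + m ^ 2) / 2)) := by
    have hb : Tendsto (fun s : ℝ => K * |s|) (nhdsWithin 0 (Set.Iio 0)) (nhds 0) := by
      simpa using (hid.abs).const_mul K
    rw [tendsto_iff_dist_tendsto_zero]
    refine squeeze_zero' (Eventually.of_forall fun _ => dist_nonneg) ?_ hb
    filter_upwards [hneg] with s hs
    have hs0 : s ≠ 0 := hs.2.ne
    have he : (u s - m * s) / s ^ 2 - (γ + m ^ 2) / 2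
        = ((∑' k : ℕ, p k * (1 + s) ^ k) - (1 + m * s + (γ + m ^ 2) / 2 * s ^ 2)) / s ^ 2 := by
      rw [hu]
      field_simp
      ring
    rw [Real.dist_eq, he, abs_div, abs_of_pos (show 0 < s ^ 2 by positivity),
      div_le_iff₀ (by positivity)]
    refine (hK s hs.1.le hs.2.le).trans (le_of_eq ?_)
    rw [← sq_abs s]
    ring
  have h1 : Tendsto (fun s => u s / s) (nhdsWithin 0 (Set.Iio 0)) (nhds m) := by
    have h := (h2.mul hid).add_const m
    rw [mul_zero, zero_add] at h
    refine h.congr' ?_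
    filter_upwards [hneg] with s hs
    have hs0 : s ≠ 0 := hs.2.ne
    field_simp
    ring
  have hu0 : Tendsto u (nhdsWithin 0 (Set.Iio 0)) (nhdsWithin 0 {0}ᶜ) := by
    rw [tendsto_nhdsWithin_iff]
    constructor
    · have h := h1.mul hid
      rw [mul_zero] at h
      refine h.congr' ?_
      filter_upwards [hneg] with s hs
      exact div_mul_cancel₀ _ hs.2.ne
    · filter_upwards [h1.eventually_const_lt hm] with s hs h0
      have h0 : u s = 0 := h0
      rw [h0, zero_div] at hs
      exact hs.false
  have h := ((tendsto_log_one_add_sub.comp hu0).mul (h1.pow 2)).add h2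
  have hlim : -1 / 2 * m ^ 2 + (γ + m ^ 2) / 2 = γ / 2 := by ring
  rw [hlim] at h
  refine h.congr' ?_
  filter_upwards [hneg, tendsto_nhdsWithin_iff.1 hu0 |>.2] with s hs hus
  have hs0 : s ≠ 0 := hs.2.ne
  have hus : u s ≠ 0 := hus
  have hf : fcgf p s = Real.log (1 + u s) := by
    rw [hu, fcgf]
    congr 1
    ring
  rw [hf]
  simp only [Function.comp]
  field_simp
  ring

/-! ### The generating function of the Hermite law -/

lemma hasSum_poissonPMF_mul_pow (l z : ℝ) :
    HasSum (fun k => poissonPMF l k * z ^ k) (Real.exp (l * (z - 1))) := by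
  have h := (NormedSpace.expSeries_div_hasSum_exp (l * z)).mul_left (Real.exp (-l))
  rw [← Real.exp_eq_exp_ℝ, ← Real.exp_add] at h
  have he : Real.exp (l * (z - 1)) = Real.exp (-l + l * z) := by
    congr 1
    ring
  rw [he]
  refine Eq.subst (motive := fun f => HasSum f _) (funext fun k => Eq.symm ?_) h
  rw [poissonPMF, mul_pow]
  ring

lemma poissonPMF_nonneg {l : ℝ} (hl : 0 ≤ l) (k : ℕ) : 0 ≤ poissonPMF l k := by
  unfold poissonPMF
  positivity

lemma hermitePMF_nonneg {μ γ : ℝ} (hγ : 0 < γ) (hμ : γ ≤ μ) (x : ℕ) : 0 ≤ hermitePMF μ γ x := by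
  refine tsum_nonneg fun q => ?_
  split_ifs
  · exact mul_nonneg (poissonPMF_nonneg (by linarith) _) (poissonPMF_nonneg (by linarith) _)
  · exact le_rfl

/-- The probability generating function of `P + 2Q` is the product of those of `P` at `z` and of
`Q` at `z ^ 2`; the double series is regrouped along the fibres of `(i, j) ↦ i + 2 j`. -/
lemma hasSum_hermitePMF_mul_pow {μ γ : ℝ} (hγ : 0 < γ) (hμ : γ ≤ μ) {z : ℝ} (hz : 0 ≤ z) :
    HasSum (fun x => hermitePMF μ γ x * z ^ x)
      (Real.exp (μ * (z - 1) + γ / 2 * (z - 1) ^ 2)) := by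
  have hP := hasSum_poissonPMF_mul_pow (μ - γ) z
  have hQ := hasSum_poissonPMF_mul_pow (γ / 2) (z ^ 2)
  have hs := hP.summable.mul_of_nonneg hQ.summable
    (fun k => mul_nonneg (poissonPMF_nonneg (by linarith) k) (pow_nonneg hz k))
    (fun k => mul_nonneg (poissonPMF_nonneg (by linarith) k) (pow_nonneg (sq_nonneg z) k))
  have h := (hP.mul hQ hs).tsum_fiberwise (fun q : ℕ × ℕ => q.1 + 2 * q.2)
  rw [← Real.exp_add] at h
  have he : Real.exp (μ * (z - 1) + γ / 2 * (z - 1) ^ 2)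
      = Real.exp ((μ - γ) * (z - 1) + γ / 2 * (z ^ 2 - 1)) := by
    congr 1
    ring
  rw [he]
  refine Eq.subst (motive := fun f => HasSum f _) (funext fun x => Eq.symm ?_) h
  rw [tsum_subtype ((fun q : ℕ × ℕ => q.1 + 2 * q.2) ⁻¹' {x})
    (fun q : ℕ × ℕ => poissonPMF (μ - γ) q.1 * z ^ q.1 * (poissonPMF (γ / 2) q.2 * (z ^ 2) ^ q.2)),
    hermitePMF, ← tsum_mul_right]
  refine tsum_congr fun q => ?_
  by_cases hq : q.1 + 2 * q.2 = x
  · rw [if_pos hq, Set.indicator_of_mem (by exact hq), ← hq, pow_add, pow_mul]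
    ring
  · rw [if_neg hq, Set.indicator_of_notMem (by exact hq), zero_mul]

/-! ### Continuity theorem and conclusion -/

/-- Continuity theorem for probability generating functions: pointwise convergence on `(0, 1)`
forces convergence of the coefficients. By strong induction, once the lower coefficients converge,
the `k`-th one is within the tail bound `z / (1 - z)` of its limit, and `z` is arbitrarily small. -/
lemma tendsto_coeff_of_tendsto_pgf {a : ℕ → ℕ → ℝ} {b : ℕ → ℝ}
    (ha0 : ∀ n k, 0 ≤ a n k) (ha1 : ∀ n, HasSum (a n) 1)
    (hb0 : ∀ k, 0 ≤ b k) (hb1 : HasSum b 1)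
    (h : ∀ z : ℝ, 0 < z → z < 1 →
      Tendsto (fun n => ∑' k, a n k * z ^ k) atTop (nhds (∑' k, b k * z ^ k))) (k : ℕ) :
    Tendsto (fun n => a n k) atTop (nhds (b k)) := by
  induction k using Nat.strong_induction_on with
  | _ k ih =>
  rw [Metric.tendsto_nhds]
  intro ε hε
  -- chosen so that `z / (1 - z) = ε / 4`
  obtain ⟨z, hz0, hz1, hzε⟩ : ∃ z : ℝ, 0 < z ∧ z < 1 ∧ z / (1 - z) = ε / 4 := by
    refine ⟨ε / (ε + 4), by positivity, ?_, ?_⟩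
    · rw [div_lt_one (by positivity)]; linarith
    · have : 1 - ε / (ε + 4) = 4 / (ε + 4) := by field_simp; ring
      rw [this]; field_simp
  have hzk : 0 < z ^ k := pow_pos hz0 k
  have hE : Tendsto (fun n => (∑' j, a n j * z ^ j) - (∑' j, b j * z ^ j)
      - ∑ j ∈ Finset.range k, (a n j - b j) * z ^ j) atTop (nhds 0) := by
    have h1 := (h z hz0 hz1).sub_const (∑' j, b j * z ^ j)
    have h2 : Tendsto (fun n => ∑ j ∈ Finset.range k, (a n j - b j) * z ^ j) atTop
        (nhds (∑ j ∈ Finset.range k, (b j - b j) * z ^ j)) :=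
      tendsto_finsetSum _ fun j hj => ((ih j (Finset.mem_range.1 hj)).sub_const _).mul_const _
    simpa using h1.sub h2
  have hE' := (Metric.tendsto_nhds.1 hE) (z ^ k * (ε / 2)) (by positivity)
  filter_upwards [hE'] with n hn
  have hA := summable_pgf (ha0 n) (ha1 n) hz0.le hz1.le
  have hB := summable_pgf hb0 hb1 hz0.le hz1.le
  have hD := hA.sub hB
  have hsplit := hD.sum_add_tsum_nat_add (k + 1)
  rw [hA.tsum_sub hB, Finset.sum_range_succ] at hsplit
  have hgeo : HasSum (fun i : ℕ => z ^ i * z ^ (k + 1)) ((1 - z)⁻¹ * z ^ (k + 1)) :=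
    (hasSum_geometric_of_lt_one hz0.le hz1).mul_right _
  have htail : |∑' i, (a n (i + (k + 1)) * z ^ (i + (k + 1))
      - b (i + (k + 1)) * z ^ (i + (k + 1)))| ≤ (1 - z)⁻¹ * z ^ (k + 1) := by
    rw [← Real.norm_eq_abs]
    refine tsum_of_norm_bounded hgeo fun i => ?_
    rw [← sub_mul, norm_mul, Real.norm_of_nonneg (pow_nonneg hz0.le (i + (k + 1))), ← pow_add]
    refine mul_le_of_le_one_left (pow_nonneg hz0.le _) (abs_le.2 ⟨?_, ?_⟩)
    · linarith [ha0 n (i + (k + 1)), le_one_of_hasSum hb0 hb1 (i + (k + 1))]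
    · linarith [hb0 (i + (k + 1)), le_one_of_hasSum (ha0 n) (ha1 n) (i + (k + 1))]
  have htail' : (1 - z)⁻¹ * z ^ (k + 1) = z ^ k * (ε / 4) := by
    rw [← hzε, pow_succ]; ring
  rw [htail'] at htail
  rw [Real.dist_eq, sub_zero] at hn
  simp only [sub_mul] at hn
  have hkey : z ^ k * |a n k - b k| < z ^ k * ε := by
    rw [← abs_of_pos hzk, ← abs_mul, abs_of_pos hzk]
    have hpos : 0 < z ^ k * (ε / 4) := by positivity
    rw [abs_lt] at hn ⊢
    rw [abs_le] at htail
    constructor <;> nlinarith [hn.1, hn.2, htail.1, htail.2]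
  rw [Real.dist_eq]
  exact lt_of_mul_lt_mul_left hkey hzk.le

/-- **Hermite convergence theorem (discrete central limit theorem).**
Let `X_1, X_2, …` be i.i.d. `ℕ`-valued with common pmf `p`, `E[(1+δ)^{X_1}] < ∞` for some
`δ > 0`, mean `m = E(X_1) > 0`, dispersion `γ = Var(X_1) − E(X_1) > 0`, and FCGF `C`.
Fix `μ ≥ γ` and suppose for each `n ≥ 1` the `ℕ`-valued variable `Z_n` (the thinning by
`n^{-1/2}` of `S_n ⊖ (nm − n^{1/2}μ)`) has FCGF
`t ↦ n·C(n^{-1/2}t) − (nm − n^{1/2}μ)·n^{-1/2}t` near `0`. Then `Z_n` converges in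
distribution to the Hermite distribution `PT₀(μ, γ)`. -/
theorem hermite_convergence
    (p : ℕ → ℝ) (hp0 : ∀ k, 0 ≤ p k) (hp1 : HasSum p 1)
    (δ : ℝ) (hδ : 0 < δ) (hmom : Summable (fun k : ℕ => p k * (1 + δ) ^ k))
    (m : ℝ) (hm : 0 < m) (hmean : pmean p = m)
    (γ : ℝ) (hγ : 0 < γ) (hdisp : pvar p - pmean p = γ)
    (μ : ℝ) (hμ : γ ≤ μ)
    (Z : ℕ → ℕ → ℝ) (hZ0 : ∀ n k, 0 ≤ Z n k) (hZ1 : ∀ n, HasSum (Z n) 1)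
    (hfcgf : ∀ n : ℕ, 1 ≤ n → ∃ ε > 0, ∀ t : ℝ, |t| < ε →
      fcgf (Z n) t
        = (n : ℝ) * fcgf p (t / Real.sqrt n)
            - ((n : ℝ) * m - Real.sqrt n * μ) * (t / Real.sqrt n)) :
    ∀ x : ℕ, Tendsto (fun n => Z n x) atTop (nhds (hermitePMF μ γ x)) := by
  refine tendsto_coeff_of_tendsto_pgf (a := Z) hZ0 hZ1 (hermitePMF_nonneg hγ hμ) ?_ ?_
  · simpa using hasSum_hermitePMF_mul_pow hγ hμ (zero_le_one (α := ℝ))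
  intro z hz0 hz1
  rw [(hasSum_hermitePMF_mul_pow hγ hμ hz0.le).tsum_eq]
  set t := z - 1 with ht
  have ht0 : -1 < t := by linarith
  have ht1 : t < 0 := by linarith
  have hsqrt : Tendsto (fun n : ℕ => Real.sqrt n) atTop atTop :=
    Real.tendsto_sqrt_atTop.comp tendsto_natCast_atTop_atTop
  have hs : Tendsto (fun n : ℕ => t / Real.sqrt n) atTop (nhdsWithin 0 (Set.Iio 0)) := by
    rw [tendsto_nhdsWithin_iff]
    refine ⟨tendsto_const_nhds.div_atTop hsqrt, ?_⟩
    filter_upwards [hsqrt.eventually_gt_atTop 0] with n hn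
    exact div_neg_of_neg_of_pos ht1 hn
  have hlim := (((tendsto_fcgf_quadratic hp0 hp1 hδ hmom hm hmean hdisp).comp hs).mul_const
    (t ^ 2)).const_add (μ * t)
  refine ((Real.continuous_exp.tendsto _).comp hlim).congr' ?_
  filter_upwards [eventually_ge_atTop 1] with n hn
  have hn0 : (0 : ℝ) < n := by exact_mod_cast hn
  have hsq : Real.sqrt n ≠ 0 := (Real.sqrt_pos.2 hn0).ne'
  have hnn : (n : ℝ) = Real.sqrt n ^ 2 := (Real.sq_sqrt hn0.le).symm
  have hF : fcgf (Z n) t = Real.log (∑' k, Z n k * z ^ k) := by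
    rw [fcgf, ht, add_sub_cancel]
  rw [← Real.exp_log (pgf_pos (hZ0 n) (hZ1 n) hz0 hz1.le), ← hF,
    fcgf_eq_of_near_zero hp0 hp1 (hZ0 n) (hZ1 n) hn _ (hfcgf n hn) ht0 ht1]
  simp only [Function.comp]
  congr 1
  generalize fcgf p (t / Real.sqrt n) = c
  rw [hnn, Real.sqrt_sq (Real.sqrt_nonneg _)]
  have ht' : t ≠ 0 := ht1.ne
  field_simp
  ring
end

section
/- Let X be an ℕ-valued random variable with E[(1+δ)^X] < ∞ for some δ > 0, with mean m = E(X) > 0 and Var(X) < E(X) (underdispersion). Then X is not infinitely dilatable; more precisely, for every c > m/(m − Var(X)) there exists no ℕ-valued random variable X_c with log E[(1+t)^{X_c}] = log E[(1+ct)^X] for all t in a neighborhood of 0. -/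
open Filter Topology

/-! ### Second-order remainder of the binomial expansion -/

/-- The remainder of `(1 + u) ^ k` after its second-order expansion at `u = 0`. -/
noncomputable def binomRem (k : ℕ) (u : ℝ) : ℝ :=
  (1 + u) ^ k - 1 - k * u - ((k : ℝ) * (k - 1) / 2) * u ^ 2

lemma binomRem_succ (k : ℕ) (u : ℝ) :
    binomRem (k + 1) u = (1 + u) * binomRem k u + ((k : ℝ) * (k - 1) / 2) * u ^ 3 := by
  unfold binomRem
  push_cast
  ring

lemma choose_two_nonneg (k : ℕ) : 0 ≤ (k : ℝ) * (k - 1) / 2 := by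
  rcases Nat.eq_zero_or_pos k with rfl | h
  · simp
  · have : (1 : ℝ) ≤ k := by exact_mod_cast h
    have : 0 ≤ (k : ℝ) - 1 := by linarith
    positivity

lemma binomRem_nonneg {d : ℝ} (hd : 0 < d) (k : ℕ) : 0 ≤ binomRem k d := by
  induction k with
  | zero => simp [binomRem]
  | succ k ih =>
    rw [binomRem_succ]
    have := choose_two_nonneg k
    positivity

/-- The remainder consists of monomials of degree at least `3` with nonnegative coefficients, so
it scales at least cubically: `|R(u)| / |u|³ ≤ R(d) / d³` for `|u| ≤ d`. -/
lemma abs_binomRem_le {d u : ℝ} (hd : 0 < d) (hu : |u| ≤ d) (k : ℕ) :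
    |binomRem k u| * d ^ 3 ≤ |u| ^ 3 * binomRem k d := by
  induction k with
  | zero => simp [binomRem]
  | succ k ih =>
    rw [binomRem_succ, binomRem_succ]
    have h1 : |1 + u| ≤ 1 + d := by
      calc |1 + u| ≤ |1| + |u| := abs_add_le _ _
        _ ≤ 1 + d := by simpa using hu
    have h2 := choose_two_nonneg k
    set a := (k : ℝ) * (k - 1) / 2
    have h3 : |(1 + u) * binomRem k u + a * u ^ 3| ≤ (1 + d) * |binomRem k u| + a * |u| ^ 3 := by
      calc _ ≤ |(1 + u) * binomRem k u| + |a * u ^ 3| := abs_add_le _ _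
        _ = |1 + u| * |binomRem k u| + a * |u| ^ 3 := by
          rw [abs_mul, abs_mul, abs_pow, abs_of_nonneg h2]
        _ ≤ _ := by gcongr
    calc _ ≤ ((1 + d) * |binomRem k u| + a * |u| ^ 3) * d ^ 3 := by gcongr
      _ = (1 + d) * (|binomRem k u| * d ^ 3) + a * |u| ^ 3 * d ^ 3 := by ring
      _ ≤ (1 + d) * (|u| ^ 3 * binomRem k d) + a * |u| ^ 3 * d ^ 3 := by gcongr
      _ = _ := by ring

/-! ### Moments and Taylor expansion of the generating function -/

section moments

variable {p : ℕ → ℝ} (hp0 : ∀ k, 0 ≤ p k) {δ : ℝ} (hδ : 0 < δ)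
  (hmom : Summable (fun k : ℕ => p k * (1 + δ) ^ k))

include hp0 hδ hmom

lemma summable_mean : Summable (fun k : ℕ => p k * (k : ℝ)) := by
  refine Summable.of_nonneg_of_le (fun k => mul_nonneg (hp0 k) (by positivity)) (fun k => ?_)
    (hmom.mul_left δ⁻¹)
  have h := binomRem_nonneg hδ k
  have h2 := choose_two_nonneg k
  have h3 : (k : ℝ) * δ ≤ (1 + δ) ^ k := by
    unfold binomRem at h
    nlinarith [mul_nonneg h2 (sq_nonneg δ)]
  rw [← div_eq_inv_mul, le_div_iff₀ hδ, mul_assoc]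
  exact mul_le_mul_of_nonneg_left h3 (hp0 k)

lemma summable_choose_two : Summable (fun k : ℕ => p k * ((k : ℝ) * (k - 1) / 2)) := by
  refine Summable.of_nonneg_of_le (fun k => mul_nonneg (hp0 k) (choose_two_nonneg k))
    (fun k => ?_) (hmom.mul_left (δ ^ 2)⁻¹)
  have h := binomRem_nonneg hδ k
  have h3 : ((k : ℝ) * (k - 1) / 2) * δ ^ 2 ≤ (1 + δ) ^ k := by
    unfold binomRem at h
    have : 0 ≤ (k : ℝ) * δ := by positivity
    linarith
  rw [← div_eq_inv_mul, le_div_iff₀ (by positivity), mul_assoc]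
  exact mul_le_mul_of_nonneg_left h3 (hp0 k)

lemma two_mul_tsum_choose_two :
    2 * ∑' k : ℕ, p k * ((k : ℝ) * (k - 1) / 2) = pvar p + pmean p ^ 2 - pmean p := by
  have h1 := summable_mean hp0 hδ hmom
  have h2 := summable_choose_two hp0 hδ hmom
  have h3 : ∑' k : ℕ, p k * (k : ℝ) ^ 2
      = 2 * (∑' k : ℕ, p k * ((k : ℝ) * (k - 1) / 2)) + ∑' k : ℕ, p k * (k : ℝ) := by
    rw [← tsum_mul_left, ← (h2.mul_left 2).tsum_add h1]
    congr 1
    ext k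
    ring
  rw [pvar, h3, pmean]
  ring

omit hδ in
lemma summable_pgf_s6 {u : ℝ} (hu : |u| ≤ δ) : Summable (fun k : ℕ => p k * (1 + u) ^ k) := by
  refine Summable.of_norm_bounded hmom (fun k => ?_)
  rw [Real.norm_eq_abs, abs_mul, abs_of_nonneg (hp0 k), abs_pow]
  have h1 : |1 + u| ≤ 1 + δ := by
    calc |1 + u| ≤ |1| + |u| := abs_add_le _ _
      _ ≤ 1 + δ := by simpa using hu
  have := hp0 k
  gcongr

/-- Second-order Taylor expansion at `0` of the factorial moment generating function, with an
explicit cubic error term. -/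
lemma abs_pgf_sub_le (hp1 : HasSum p 1) {u : ℝ} (hu : |u| ≤ δ) :
    |∑' k : ℕ, p k * (1 + u) ^ k
      - (1 + pmean p * u + (∑' k : ℕ, p k * ((k : ℝ) * (k - 1) / 2)) * u ^ 2)|
      ≤ (∑' k : ℕ, p k * (1 + δ) ^ k) / δ ^ 3 * |u| ^ 3 := by
  have h1 := (summable_mean hp0 hδ hmom).hasSum
  have h2 := (summable_choose_two hp0 hδ hmom).hasSum
  have h3 := (summable_pgf_s6 hp0 hmom hu).hasSum
  have h := h3.sub ((hp1.add (h1.mul_right u)).add (h2.mul_right (u ^ 2)))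
  have hK := (hmom.hasSum.div_const (δ ^ 3)).mul_right (|u| ^ 3)
  have key : ∀ k : ℕ, ‖p k * (1 + u) ^ k
      - (p k + p k * (k : ℝ) * u + p k * ((k : ℝ) * (k - 1) / 2) * u ^ 2)‖
      ≤ p k * (1 + δ) ^ k / δ ^ 3 * |u| ^ 3 := by
    intro k
    have e : p k * (1 + u) ^ k
        - (p k + p k * (k : ℝ) * u + p k * ((k : ℝ) * (k - 1) / 2) * u ^ 2)
        = p k * binomRem k u := by
      unfold binomRem; ring
    have h4 : binomRem k δ ≤ (1 + δ) ^ k := by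
      have := choose_two_nonneg k
      have h5 : 0 ≤ (k : ℝ) * δ := by positivity
      have h6 : 0 ≤ ((k : ℝ) * (k - 1) / 2) * δ ^ 2 := by positivity
      unfold binomRem; linarith
    have h7 : |binomRem k u| ≤ (1 + δ) ^ k / δ ^ 3 * |u| ^ 3 := by
      rw [div_mul_eq_mul_div, le_div_iff₀ (by positivity)]
      calc _ ≤ |u| ^ 3 * binomRem k δ := abs_binomRem_le hδ hu k
        _ ≤ |u| ^ 3 * (1 + δ) ^ k := by gcongr
        _ = _ := by ring
    rw [e, Real.norm_eq_abs, abs_mul, abs_of_nonneg (hp0 k)]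
    calc _ ≤ p k * ((1 + δ) ^ k / δ ^ 3 * |u| ^ 3) := mul_le_mul_of_nonneg_left h7 (hp0 k)
      _ = _ := by ring
  have := tsum_of_norm_bounded hK key
  rw [h.tsum_eq, Real.norm_eq_abs] at this
  exact this

lemma one_add_mean_le_pgf (hp1 : HasSum p 1) {u : ℝ} (hu0 : 0 ≤ u) (hu : u ≤ δ) :
    1 + pmean p * u ≤ ∑' k : ℕ, p k * (1 + u) ^ k := by
  have h1 := (summable_mean hp0 hδ hmom).hasSum
  have h3 := (summable_pgf_s6 hp0 hmom (u := u) (by rwa [abs_of_nonneg hu0])).hasSum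
  refine hasSum_le (fun k => ?_) (hp1.add (h1.mul_right u)) h3
  have := one_add_mul_le_pow (a := u) (by linarith) k
  calc p k + p k * (k : ℝ) * u = p k * (1 + k * u) := by ring
    _ ≤ _ := mul_le_mul_of_nonneg_left this (hp0 k)

end moments

/-! ### Generating functions at reciprocal points -/

lemma pgf_pos_s6 {q : ℕ → ℝ} (hq0 : ∀ k, 0 ≤ q k) (hq1 : HasSum q 1) {x : ℝ} (hx : 0 < x)
    (hs : Summable (fun k : ℕ => q k * x ^ k)) : 0 < ∑' k : ℕ, q k * x ^ k := by
  obtain ⟨k, hk⟩ : ∃ k, q k ≠ 0 := by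
    by_contra! h
    have : q = 0 := funext h
    subst this
    exact one_ne_zero (hq1.unique hasSum_zero)
  have hk' : 0 < q k := lt_of_le_of_ne (hq0 k) hk.symm
  exact hs.tsum_pos (fun j => mul_nonneg (hq0 j) (by positivity)) k (by positivity)

lemma summable_pgf_of_le_one {q : ℕ → ℝ} (hq0 : ∀ k, 0 ≤ q k) (hq1 : HasSum q 1) {y : ℝ}
    (hy : 0 ≤ y) (hy1 : y ≤ 1) : Summable (fun k : ℕ => q k * y ^ k) :=
  Summable.of_nonneg_of_le (fun k => mul_nonneg (hq0 k) (by positivity))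
    (fun k => mul_le_of_le_one_right (hq0 k) (pow_le_one₀ hy hy1)) hq1.summable

/-- For `Y` with law `q`, `1 ≤ E[x^Y] E[x^{-Y}]`: the Cauchy–Schwarz inequality for `x^{Y/2}` and
`x^{-Y/2}`, proved by the weighted inequality of arithmetic and geometric means. -/
lemma one_le_pgf_mul_pgf_inv {q : ℕ → ℝ} (hq0 : ∀ k, 0 ≤ q k) (hq1 : HasSum q 1) {x : ℝ}
    (hx : 1 < x) (hs : Summable (fun k : ℕ => q k * x ^ k)) :
    1 ≤ (∑' k : ℕ, q k * x ^ k) * ∑' k : ℕ, q k * x⁻¹ ^ k := by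
  have hx0 : 0 < x := by linarith
  have hA := pgf_pos_s6 hq0 hq1 hx0 hs
  have hB := summable_pgf_of_le_one hq0 hq1 (inv_nonneg.2 hx0.le) (inv_le_one_of_one_le₀ hx.le)
  set A := ∑' k : ℕ, q k * x ^ k with hAdef
  -- Sum `2 ≤ x^k / A + A x^{-k}` against `q`; the weight `A` makes the bound sharp.
  have h := hasSum_le (f := fun k => q k * 2)
    (g := fun k => q k * x ^ k / A + A * (q k * x⁻¹ ^ k)) (fun k => ?_)
    (hq1.mul_right 2) ((hs.hasSum.div_const A).add (hB.hasSum.mul_left A))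
  · rw [← hAdef, div_self hA.ne'] at h
    linarith
  · have hz : 0 < x ^ k / A := by positivity
    have e : A * x⁻¹ ^ k = (x ^ k / A)⁻¹ := by
      rw [inv_div, inv_pow, div_eq_mul_inv]
    have h2 : 2 ≤ x ^ k / A + A * x⁻¹ ^ k := by
      rw [e]
      have h3 := mul_inv_cancel₀ hz.ne'
      have h4 : 0 < (x ^ k / A)⁻¹ := by positivity
      nlinarith [sq_nonneg (x ^ k / A - (x ^ k / A)⁻¹)]
    calc q k * 2 ≤ q k * (x ^ k / A + A * x⁻¹ ^ k) := mul_le_mul_of_nonneg_left h2 (hq0 k)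
      _ = _ := by ring

/-! ### Comparison of second-order terms -/

/-- The coefficient of `s²` in `P(cs) P(-cs/(1+s)) - 1`, for `P(u) = 1 + mu + hu² + O(u³)`, is
nonnegative as soon as the product is at least `1` for small `s > 0`. -/
lemma second_order_nonneg {P : ℝ → ℝ} {m h K c δ : ℝ} (hδ : 0 < δ) (hc : 0 < c)
    (hP : ∀ u, |u| ≤ δ → |P u - (1 + m * u + h * u ^ 2)| ≤ K * |u| ^ 3)
    (hprod : ∀ᶠ s in 𝓝[>] (0 : ℝ), 1 ≤ P (c * s) * P (c * (-s / (1 + s)))) :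
    0 ≤ m * c + 2 * h * c ^ 2 - m ^ 2 * c ^ 2 := by
  set E : ℝ → ℝ := fun u => P u - (1 + m * u + h * u ^ 2) with hE
  have hEt : ∀ g : ℝ → ℝ, (∀ s, 0 < s → |g s| ≤ c * s) →
      Tendsto (fun s => E (g s) / s ^ 2) (𝓝[>] (0 : ℝ)) (𝓝 0) := by
    intro g hg
    have hK : 0 ≤ K := by
      have h0 := (abs_nonneg _).trans (hP δ (abs_of_pos hδ).le)
      rw [abs_of_pos hδ] at h0
      exact nonneg_of_mul_nonneg_left h0 (by positivity)
    have hlim : Tendsto (fun s : ℝ => K * c ^ 3 * s) (𝓝[>] (0 : ℝ)) (𝓝 0) := by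
      have : Tendsto (fun s : ℝ => K * c ^ 3 * s) (𝓝 (0 : ℝ)) (𝓝 (K * c ^ 3 * 0)) :=
        (continuous_const.mul continuous_id).tendsto 0
      rw [mul_zero] at this
      exact this.mono_left nhdsWithin_le_nhds
    refine squeeze_zero_norm' ?_ hlim
    filter_upwards [Ioo_mem_nhdsGT (show (0 : ℝ) < δ / c by positivity)] with s hs
    have hs0 := hs.1
    have hgs := hg s hs0
    have h1 : c * s ≤ δ := by
      have := (lt_div_iff₀ hc).1 hs.2
      linarith
    rw [Real.norm_eq_abs, abs_div, abs_of_pos (show 0 < s ^ 2 by positivity),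
      div_le_iff₀ (by positivity)]
    calc |E (g s)| ≤ K * |g s| ^ 3 := hP _ (hgs.trans h1)
      _ ≤ K * (c * s) ^ 3 := by gcongr
      _ = _ := by ring
  have hE1 := hEt (fun s => c * s) (fun s hs => by rw [abs_of_pos (by positivity)])
  have hE2 := hEt (fun s => c * (-s / (1 + s))) (fun s hs => by
    rw [abs_mul, abs_of_pos hc, abs_div, abs_neg, abs_of_pos hs,
      abs_of_pos (show 0 < 1 + s by linarith)]
    gcongr
    exact div_le_self hs.le (by linarith))
  have hs0 : Tendsto (fun s : ℝ => s) (𝓝[>] (0 : ℝ)) (𝓝 0) :=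
    tendsto_id.mono_left nhdsWithin_le_nhds
  have hinv : Tendsto (fun s : ℝ => (1 + s)⁻¹) (𝓝[>] (0 : ℝ)) (𝓝 1) := by
    have := (tendsto_const_nhds (x := (1 : ℝ)).add hs0).inv₀ (by norm_num)
    simpa using this
  -- `a s = (P(cs) - 1) / s` and `b s = (P(-cs/(1+s)) - 1) / s`, so that
  -- `(P(cs) P(-cs/(1+s)) - 1) / s² = (a s + b s) / s + a s * b s`.
  have ha := ((tendsto_const_nhds (x := m * c)).add (hs0.const_mul (h * c ^ 2))).add
    (hE1.mul hs0)
  have hb := (((hinv.const_mul (-(m * c)))).add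
    ((hs0.const_mul (h * c ^ 2)).mul (hinv.pow 2))).add (hE2.mul hs0)
  have hsum := (((hinv.const_mul (m * c)).add_const (h * c ^ 2)).add
    ((hinv.pow 2).const_mul (h * c ^ 2))).add (hE1.add hE2)
  have hlim := hsum.add (ha.mul hb)
  have hge := ge_of_tendsto (b := (0 : ℝ)) hlim ?_
  · nlinarith [hge]
  · filter_upwards [hprod, self_mem_nhdsWithin] with s hs hspos
    have hspos : 0 < s := hspos
    have h1s : 1 + s ≠ 0 := by positivity
    have hid : ∀ X Y : ℝ, X = E (c * s) → Y = E (c * (-s / (1 + s))) →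
        m * c * (1 + s)⁻¹ + h * c ^ 2 + h * c ^ 2 * (1 + s)⁻¹ ^ 2 + (X / s ^ 2 + Y / s ^ 2)
          + (m * c + h * c ^ 2 * s + X / s ^ 2 * s)
            * (-(m * c) * (1 + s)⁻¹ + h * c ^ 2 * s * (1 + s)⁻¹ ^ 2 + Y / s ^ 2 * s)
        = (P (c * s) * P (c * (-s / (1 + s))) - 1) / s ^ 2 := by
      intro X Y hX hY
      have e1 : P (c * s) = 1 + m * (c * s) + h * (c * s) ^ 2 + X := by
        rw [hX, hE]; ring
      have e2 : P (c * (-s / (1 + s))) = 1 + m * (c * (-s / (1 + s)))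
          + h * (c * (-s / (1 + s))) ^ 2 + Y := by
        rw [hY, hE]; ring
      rw [e1, e2]
      field_simp
      ring
    rw [hid _ _ rfl rfl]
    exact div_nonneg (by linarith) (by positivity)

/-- A dilation by `c` exists only if `c (m - Var X) ≤ m`. -/
lemma dilation_bound
    (p : ℕ → ℝ) (hp0 : ∀ k, 0 ≤ p k) (hp1 : HasSum p 1)
    (δ : ℝ) (hδ : 0 < δ) (hmom : Summable (fun k : ℕ => p k * (1 + δ) ^ k))
    (hm : 0 < pmean p) {c : ℝ} (hc : 0 < c) (q : ℕ → ℝ) (hq0 : ∀ k, 0 ≤ q k)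
    (hq1 : HasSum q 1) (ε : ℝ) (hε : 0 < ε)
    (heq : ∀ t : ℝ, |t| < ε → fcgf q t = fcgf p (c * t)) :
    c * (pmean p - pvar p) ≤ pmean p := by
  have key := second_order_nonneg (P := fun u => ∑' k : ℕ, p k * (1 + u) ^ k) (c := c) hδ hc
    (fun u hu => abs_pgf_sub_le hp0 hδ hmom hp1 hu) ?_
  · have h2 := two_mul_tsum_choose_two hp0 hδ hmom
    rw [h2] at key
    have : 0 ≤ c * (pmean p - c * (pmean p - pvar p)) := by linarith
    have := nonneg_of_mul_nonneg_right this hc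
    linarith
  · have hr : 0 < min ε (min (δ / c) (1 / c)) := by positivity
    filter_upwards [Ioo_mem_nhdsGT hr] with s hs
    obtain ⟨hs0, hs1⟩ := hs
    obtain ⟨hsε, hs2⟩ := lt_min_iff.1 hs1
    obtain ⟨hsδ, hs1⟩ := lt_min_iff.1 hs2
    rw [lt_div_iff₀ hc] at hsδ hs1
    have hcs : 0 < c * s := by positivity
    have h1s : 0 < 1 + s := by linarith
    have hsq : Summable (fun k : ℕ => q k * (1 + s) ^ k) := by
      by_contra hns
      have h1 := heq s (by rwa [abs_of_pos hs0])
      have h2 := one_add_mean_le_pgf hp0 hδ hmom hp1 hcs.le (by linarith)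
      rw [fcgf, fcgf, tsum_eq_zero_of_not_summable hns, Real.log_zero] at h1
      have h3 : 0 < pmean p * (c * s) := by positivity
      have := Real.log_pos (lt_of_lt_of_le (by linarith : 1 < 1 + pmean p * (c * s)) h2)
      linarith
    have e : 1 + -s / (1 + s) = (1 + s)⁻¹ := by field_simp; ring
    have hv : |(-s / (1 + s))| ≤ s := by
      rw [abs_div, abs_neg, abs_of_pos hs0, abs_of_pos h1s]
      exact div_le_self hs0.le (by linarith)
    have hcv : |c * (-s / (1 + s))| ≤ c * s := by
      rw [abs_mul, abs_of_pos hc]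
      gcongr
    have hinv1 : (1 + s)⁻¹ ≤ 1 := inv_le_one_of_one_le₀ (by linarith)
    have e1 : ∑' k : ℕ, q k * (1 + s) ^ k = ∑' k : ℕ, p k * (1 + c * s) ^ k :=
      Real.log_injOn_pos (pgf_pos_s6 hq0 hq1 h1s hsq)
        (pgf_pos_s6 hp0 hp1 (by linarith)
          (summable_pgf_s6 hp0 hmom (by rw [abs_of_pos hcs]; linarith)))
        (heq s (by rwa [abs_of_pos hs0]))
    have e2 : ∑' k : ℕ, q k * (1 + s)⁻¹ ^ k
        = ∑' k : ℕ, p k * (1 + c * (-s / (1 + s))) ^ k := by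
      have h := heq (-s / (1 + s)) (lt_of_le_of_lt hv hsε)
      simp only [fcgf, e] at h
      refine Real.log_injOn_pos (pgf_pos_s6 hq0 hq1 (by positivity)
        (summable_pgf_of_le_one hq0 hq1 (by positivity) hinv1)) (pgf_pos_s6 hp0 hp1 ?_
          (summable_pgf_s6 hp0 hmom (by linarith))) h
      have := (abs_le.1 hcv).1
      linarith
    have := one_le_pgf_mul_pgf_inv hq0 hq1 (by linarith : 1 < 1 + s) hsq
    rwa [e1, e2] at this

/-- **An underdispersed random variable is not infinitely dilatable.**
Let `X` be `ℕ`-valued with pmf `p`, `E[(1+δ)^X] < ∞` for some `δ > 0`, mean `m = E(X) > 0`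
and `Var(X) < E(X)` (underdispersion). Then `X` is not infinitely dilatable; more precisely,
for every `c > m/(m − Var(X))` there is no `ℕ`-valued random variable `X_c` with
`log E[(1+t)^{X_c}] = log E[(1+ct)^X]` for all `t` in a neighborhood of `0`. -/
theorem underdispersed_not_infinitely_dilatable
    (p : ℕ → ℝ) (hp0 : ∀ k, 0 ≤ p k) (hp1 : HasSum p 1)
    (δ : ℝ) (hδ : 0 < δ) (hmom : Summable (fun k : ℕ => p k * (1 + δ) ^ k))
    (hm : 0 < pmean p) (hunder : pvar p < pmean p) :
    (¬ ∀ c : ℝ, 0 < c → ∃ q : ℕ → ℝ, (∀ k, 0 ≤ q k) ∧ HasSum q 1 ∧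
        ∃ ε > 0, ∀ t : ℝ, |t| < ε → fcgf q t = fcgf p (c * t)) ∧
    ∀ c : ℝ, pmean p / (pmean p - pvar p) < c →
      ¬ ∃ q : ℕ → ℝ, (∀ k, 0 ≤ q k) ∧ HasSum q 1 ∧
          ∃ ε > 0, ∀ t : ℝ, |t| < ε → fcgf q t = fcgf p (c * t) := by
  have hd : 0 < pmean p - pvar p := by linarith
  have main : ∀ c : ℝ, pmean p / (pmean p - pvar p) < c →
      ¬ ∃ q : ℕ → ℝ, (∀ k, 0 ≤ q k) ∧ HasSum q 1 ∧
          ∃ ε > 0, ∀ t : ℝ, |t| < ε → fcgf q t = fcgf p (c * t) := by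
    rintro c hc ⟨q, hq0, hq1, ε, hε, heq⟩
    have hc0 : 0 < c := lt_trans (by positivity) hc
    have := dilation_bound p hp0 hp1 δ hδ hmom hm hc0 q hq0 hq1 ε hε heq
    rw [div_lt_iff₀ hd] at hc
    linarith
  refine ⟨fun h => ?_, main⟩
  exact main (pmean p / (pmean p - pvar p) + 1) (by linarith) (h _ (by positivity))
end

section
/- Let I₁ and I₂ be open real intervals with 0 ∈ I₂, and let C₁ : I₁ → ℝ and C₂ : I₂ → ℝ be twice continuously differentiable functions whose second derivatives are nonvanishing and have the same constant sign (both positive or both negative), so that C₁′ and C₂′ are strictly monotone. Suppose there is an open interval Ψ ⊆ C₁′(I₁) ∩ C₂′(I₂) containing C₂′(0) such that C₁″((C₁′)^{-1}(μ)) = C₂″((C₂′)^{-1}(μ)) for all μ ∈ Ψ. Then, setting θ = (C₁′)^{-1}(C₂′(0)), one has C₂(t) − C₂(0) = C₁(θ + t) − C₁(θ) for every t such that t ∈ I₂, θ + t ∈ I₁, and C₂′(s) ∈ Ψ for all s between 0 and t. -/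
/-!
Let `g` be the inverse of `C₁'` on `I₁`. By the inverse function theorem and the chain rule,
`s ↦ g (C₂' s)` has derivative `C₂''(s) / C₁''(g (C₂' s))` as long as `C₂' s ∈ Ψ`, and equality of
the dispersion functions says that this quotient is `1`. Since `g (C₂' 0) = θ`, it follows that
`g (C₂' s) = θ + s`, i.e. `C₂' s = C₁' (θ + s)`, for all `s` between `0` and `t`. Hence
`s ↦ C₂ s - C₁ (θ + s)` has zero derivative on that segment, and is constant there.
-/

open Set

theorem eq_of_hasDerivAt_zero_uIcc {f : ℝ → ℝ} {t : ℝ}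
    (hf : ∀ s ∈ uIcc 0 t, HasDerivAt f 0 s) : ∀ s ∈ uIcc 0 t, f s = f 0 := by
  intro s hs
  have h := (convex_uIcc (0 : ℝ) t).norm_image_sub_le_of_norm_hasDerivWithin_le (C := 0)
    (fun x hx => (hf x hx).hasDerivWithinAt) (fun x _ => by simp) left_mem_uIcc hs
  rw [zero_mul, norm_le_zero_iff] at h
  exact sub_eq_zero.mp h

theorem injOn_of_hasDerivAt_of_sign {I : Set ℝ} (hI : Convex ℝ I) {f f' : ℝ → ℝ}
    (hf : ∀ x ∈ I, HasDerivAt f (f' x) x)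
    (hs : (∀ x ∈ I, 0 < f' x) ∨ (∀ x ∈ I, f' x < 0)) : InjOn f I := by
  have hc : ContinuousOn f I := fun x hx => (hf x hx).continuousAt.continuousWithinAt
  rcases hs with hs | hs
  · refine (strictMonoOn_of_deriv_pos hI hc fun x hx => ?_).injOn
    rw [(hf x (interior_subset hx)).deriv]
    exact hs x (interior_subset hx)
  · refine (strictAntiOn_of_deriv_neg hI hc fun x hx => ?_).injOn
    rw [(hf x (interior_subset hx)).deriv]
    exact hs x (interior_subset hx)

/-- **Characterization of factorial tilting families by local dispersion functions
(analytic core).** Let `I₁, I₂` be open real intervals with `0 ∈ I₂` and let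
`C₁ : I₁ → ℝ`, `C₂ : I₂ → ℝ` be `C²` functions whose second derivatives are nonvanishing
with the same constant sign (so `C₁′, C₂′` are strictly monotone). If the local dispersion
functions agree on an open interval `Ψ ⊆ C₁′(I₁) ∩ C₂′(I₂)` containing `C₂′(0)`, i.e.
`C₁″((C₁′)⁻¹(μ)) = C₂″((C₂′)⁻¹(μ))` for all `μ ∈ Ψ`, then setting `θ = (C₁′)⁻¹(C₂′(0))`,
one has `C₂(t) − C₂(0) = C₁(θ + t) − C₁(θ)` whenever `t ∈ I₂`, `θ + t ∈ I₁` and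
`C₂′(s) ∈ Ψ` for all `s` between `0` and `t`. -/
theorem tilting_characterized_by_dispersion_function
    (I₁ I₂ : Set ℝ) (hI₁o : IsOpen I₁) (hI₁c : Convex ℝ I₁)
    (hI₂o : IsOpen I₂) (hI₂c : Convex ℝ I₂) (h0 : (0 : ℝ) ∈ I₂)
    (C₁ C₂ C₁' C₂' C₁'' C₂'' : ℝ → ℝ)
    (hC₁' : ∀ x ∈ I₁, HasDerivAt C₁ (C₁' x) x)
    (hC₂' : ∀ x ∈ I₂, HasDerivAt C₂ (C₂' x) x)
    (hC₁'' : ∀ x ∈ I₁, HasDerivAt C₁' (C₁'' x) x)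
    (hC₂'' : ∀ x ∈ I₂, HasDerivAt C₂' (C₂'' x) x)
    (hcont₁ : ContinuousOn C₁'' I₁) (hcont₂ : ContinuousOn C₂'' I₂)
    (hsign : (∀ x ∈ I₁, 0 < C₁'' x) ∧ (∀ x ∈ I₂, 0 < C₂'' x) ∨
             (∀ x ∈ I₁, C₁'' x < 0) ∧ (∀ x ∈ I₂, C₂'' x < 0))
    (Ψ : Set ℝ) (hΨo : IsOpen Ψ) (hΨc : Convex ℝ Ψ)
    (hΨsub : Ψ ⊆ (C₁' '' I₁) ∩ (C₂' '' I₂)) (hΨ0 : C₂' 0 ∈ Ψ)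
    (hdisp : ∀ x₁ ∈ I₁, ∀ x₂ ∈ I₂, C₁' x₁ ∈ Ψ → C₁' x₁ = C₂' x₂ → C₁'' x₁ = C₂'' x₂) :
    ∀ θ ∈ I₁, C₁' θ = C₂' 0 →
      ∀ t : ℝ, t ∈ I₂ → θ + t ∈ I₁ → (∀ s ∈ uIcc 0 t, C₂' s ∈ Ψ) →
        C₂ t - C₂ 0 = C₁ (θ + t) - C₁ θ := by
  intro θ hθ hθ0 t ht _ hΨt
  have hinj : InjOn C₁' I₁ := injOn_of_hasDerivAt_of_sign hI₁c hC₁'' (hsign.imp And.left And.left)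
  have hne : ∀ x ∈ I₁, C₁'' x ≠ 0 := fun x hx =>
    hsign.elim (fun h => (h.1 x hx).ne') (fun h => (h.1 x hx).ne)
  have hsub : uIcc 0 t ⊆ I₂ := hI₂c.ordConnected.uIcc_subset h0 ht
  let g : ℝ → ℝ := Function.invFunOn C₁' I₁
  have hgl : ∀ x ∈ I₁, g (C₁' x) = x := fun x hx => hinj.leftInvOn_invFunOn hx
  have hgm : ∀ s ∈ uIcc 0 t, g (C₂' s) ∈ I₁ ∧ C₁' (g (C₂' s)) = C₂' s := fun s hs =>
    ⟨Function.invFunOn_mem (hΨsub (hΨt s hs)).1, Function.invFunOn_eq (hΨsub (hΨt s hs)).1⟩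
  have hder : ∀ s ∈ uIcc 0 t, HasDerivAt (fun s => g (C₂' s) - s) 0 s := by
    intro s hs
    obtain ⟨hx, hxs⟩ := hgm s hs
    have hstrict : HasStrictDerivAt C₁' (C₁'' (g (C₂' s))) (g (C₂' s)) :=
      hasStrictDerivAt_of_hasDerivAt_of_continuousAt
        (Filter.eventually_of_mem (hI₁o.mem_nhds hx) hC₁'')
        (hcont₁.continuousAt (hI₁o.mem_nhds hx))
    have hg := (hstrict.to_local_left_inverse (hne _ hx)
      (Filter.eventually_of_mem (hI₁o.mem_nhds hx) hgl)).hasDerivAt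
    rw [hxs] at hg
    have hd := (hg.comp s (hC₂'' s (hsub hs))).sub (hasDerivAt_id s)
    rw [← hdisp _ hx s (hsub hs) (hxs.symm ▸ hΨt s hs) hxs, inv_mul_cancel₀ (hne _ hx),
      sub_self] at hd
    exact hd
  have hshift : ∀ s ∈ uIcc 0 t, g (C₂' s) = θ + s := by
    intro s hs
    have h := eq_of_hasDerivAt_zero_uIcc hder s hs
    simp only [← hθ0, hgl θ hθ] at h
    linarith
  have hconst : ∀ s ∈ uIcc 0 t, HasDerivAt (fun s => C₂ s - C₁ (θ + s)) 0 s := by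
    intro s hs
    obtain ⟨hx, hxs⟩ := hgm s hs
    rw [hshift s hs] at hx hxs
    have hd := (hC₂' s (hsub hs)).sub ((hC₁' _ hx).comp_const_add θ s)
    rwa [hxs, sub_self] at hd
  have h := eq_of_hasDerivAt_zero_uIcc hconst t right_mem_uIcc
  simp only [add_zero] at h
  linarith
end

section
/- Let v : (0, ∞) → ℝ be continuous with v(μ) ≠ 0 for all μ > 0, and suppose there exists a nondegenerate interval A ⊆ (0, ∞) such that v(1)·v(cμ) = v(c)·v(μ) for all c ∈ A and all μ > 0. Then there exists p ∈ ℝ such that v(μ) = v(1)·μ^p for all μ > 0. -/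
/-!
In logarithmic coordinates `g t = log (v (exp t) / v 1)` is a well-defined continuous function on
`ℝ`: the quotient never vanishes and equals `1` at `t = 0`, so it is positive by the intermediate
value theorem. The functional equation says that every `s ∈ log A` is an *additive period* of `g`,
i.e. `g (s + t) = g s + g t` for all `t`. Since `g 0 = 0`, the additive periods form a subgroup of
`ℝ`; it contains a nonempty open interval, so it is open, hence all of `ℝ` by connectedness. Thus
`g` is additive and continuous, so it is linear, `g t = t * g 1`, and `p = g 1`.
-/

open Set

/-- A continuous `g : ℝ → ℝ` with `g 0 = 0` which satisfies Cauchy's equation for one variable in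
a nondegenerate interval and the other arbitrary is linear. -/
lemma linear_of_additive_on_Ioo (g : ℝ → ℝ) (hg : Continuous g) (h0 : g 0 = 0) {a b : ℝ}
    (hab : a < b) (h : ∀ s ∈ Ioo a b, ∀ t, g (s + t) = g s + g t) (t : ℝ) :
    g t = t * g 1 := by
  let H : AddSubgroup ℝ :=
    { carrier := {s | ∀ t, g (s + t) = g s + g t}
      zero_mem' := by intro t; simp [h0]
      add_mem' := by
        intro x y hx hy t
        rw [add_assoc, hx, hy, hx, add_assoc]
      neg_mem' := by
        intro x hx t
        have h1 := hx (-x)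
        have h2 := hx (-x + t)
        rw [add_neg_cancel, h0] at h1
        rw [add_neg_cancel_left] at h2
        linarith }
  have hopen : IsOpen (H : Set ℝ) := by
    refine H.isOpen_of_mem_nhds (g := (a + b) / 2) ?_
    exact Filter.mem_of_superset (Ioo_mem_nhds (by linarith) (by linarith)) h
  have huniv : (H : Set ℝ) = univ :=
    IsClopen.eq_univ ⟨H.isClosed_of_isOpen hopen, hopen⟩ ⟨0, H.zero_mem⟩
  have hadd : ∀ s t, g (s + t) = g s + g t := fun s => by
    have : s ∈ (H : Set ℝ) := huniv ▸ mem_univ s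
    exact this
  let G : ℝ →+ ℝ := ⟨⟨g, h0⟩, hadd⟩
  have := map_real_smul G hg t 1
  simpa [G] using this

/-- **Power-function characterization via the dilation functional equation.**
If `v : (0,∞) → ℝ` is continuous and nonvanishing, and `v(1)·v(cμ) = v(c)·v(μ)` holds
for all `c` in some nondegenerate interval `A ⊆ (0,∞)` and all `μ > 0`, then
`v(μ) = v(1)·μ^p` for some power `p`. -/
theorem dispersion_functional_equation_power
    (v : ℝ → ℝ) (hv : ContinuousOn v (Ioi 0))
    (hvne : ∀ μ : ℝ, 0 < μ → v μ ≠ 0)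
    (A : Set ℝ) (hA1 : A ⊆ Ioi 0) (hA2 : Convex ℝ A)
    (hA3 : ∃ x ∈ A, ∃ y ∈ A, x ≠ y)
    (hfe : ∀ c ∈ A, ∀ μ : ℝ, 0 < μ → v 1 * v (c * μ) = v c * v μ) :
    ∃ p : ℝ, ∀ μ : ℝ, 0 < μ → v μ = v 1 * μ ^ p := by
  have hv1 : v 1 ≠ 0 := hvne 1 one_pos
  obtain ⟨x, hx, y, hy, hxy⟩ : ∃ x ∈ A, ∃ y ∈ A, x < y := by
    obtain ⟨x, hx, y, hy, hne⟩ := hA3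
    rcases hne.lt_or_gt with h | h
    · exact ⟨x, hx, y, hy, h⟩
    · exact ⟨y, hy, x, hx, h⟩
  have hx0 : 0 < x := hA1 hx
  have hy0 : 0 < y := hA1 hy
  set f : ℝ → ℝ := fun t => v (Real.exp t) / v 1 with hf
  have hfc : Continuous f :=
    (hv.comp_continuous Real.continuous_exp fun t => Real.exp_pos t).div_const _
  have hf0 : f 0 = 1 := by simp [hf, hv1]
  have hfne : ∀ t, f t ≠ 0 := fun t => div_ne_zero (hvne _ (Real.exp_pos t)) hv1
  have hfpos : ∀ t, 0 < f t := by
    intro t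
    by_contra! ht
    obtain ⟨s, hs⟩ := mem_range_of_exists_le_of_exists_ge hfc ⟨t, ht⟩
      ⟨0, by rw [hf0]; exact zero_le_one⟩
    exact hfne s hs
  have hlin := linear_of_additive_on_Ioo (fun t => Real.log (f t)) (hfc.log hfne)
    (by simp [hf0]) (Real.log_lt_log hx0 hxy) (by
      intro s hs t
      have hsA : Real.exp s ∈ A := hA2.ordConnected.out hx hy
        ⟨((Real.log_lt_iff_lt_exp hx0).1 hs.1).le, ((Real.lt_log_iff_exp_lt hy0).1 hs.2).le⟩
      have hmul : f (s + t) = f s * f t := by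
        have := hfe _ hsA _ (Real.exp_pos t)
        simp only [hf, Real.exp_add]
        field_simp
        linarith
      simp only [hmul, Real.log_mul (hfne s) (hfne t)])
  refine ⟨Real.log (f 1), fun μ hμ => ?_⟩
  have h1 := hlin (Real.log μ)
  rw [Real.rpow_def_of_pos hμ, ← h1, Real.exp_log (hfpos _)]
  simp only [hf, Real.exp_log hμ]
  field_simp
end

section
/- Let v : (0, ∞) → ℝ be continuous and suppose there exists a nondegenerate interval A ⊆ (0, ∞) such that λ·v(m/λ) = v(m) for all λ ∈ A and all m > 0. Then v(μ) = v(1)·μ for all μ > 0, i.e., v is linear. -/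
/-! The scalars `t > 0` with `v (t * m) = t * v m` for all `m > 0` form a subgroup of the
multiplicative group of positive reals. It contains the interval `A`, hence (by quotients of elements
of `A`) some `[1, r]` with `r > 1`; `homogeneous_of_le_pow` multiplies this up to `[1, r ^ n]` for
every `n`, so the subgroup is everything, and `m = 1` gives the linearity. -/

open Set

/-- Homogeneity for scalars in `[1, r]` propagates to `[1, r ^ n]`: a scalar `t ≥ r` factors as
`r * (t / r)`. -/
lemma homogeneous_of_le_pow {v : ℝ → ℝ} {r : ℝ} (hr : 1 < r)
    (h : ∀ t, 1 ≤ t → t ≤ r → ∀ m, 0 < m → v (t * m) = t * v m) (n : ℕ) :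
    ∀ t, 1 ≤ t → t ≤ r ^ n → ∀ m, 0 < m → v (t * m) = t * v m := by
  have hr0 : 0 < r := by linarith
  induction n with
  | zero =>
    intro t h1 h2 m hm
    exact h t h1 (by rw [pow_zero] at h2; linarith) m hm
  | succ n ih =>
    intro t h1 h2 m hm
    rcases le_total t r with htr | htr
    · exact h t h1 htr m hm
    · have e1 := ih (t / r) ((one_le_div hr0).2 htr) ((div_le_iff₀ hr0).2 (by rwa [← pow_succ])) m hm
      have e2 := h r hr.le le_rfl (t / r * m) (by positivity)
      rw [e1, ← mul_assoc, ← mul_assoc, mul_div_cancel₀ t hr0.ne'] at e2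
      exact e2

/-- **Linearity of the dispersion function from invariance of tilting families (Neyman Type A).**
If `v : (0,∞) → ℝ` is continuous and `λ·v(m/λ) = v(m)` holds for all `λ` in some
nondegenerate interval `A ⊆ (0,∞)` and all `m > 0`, then `v(μ) = v(1)·μ`,
i.e. `v` is linear. -/
theorem neyman_type_A_dispersion_linear
    (v : ℝ → ℝ) (hv : ContinuousOn v (Ioi 0))
    (A : Set ℝ) (hA1 : A ⊆ Ioi 0) (hA2 : Convex ℝ A)
    (hA3 : ∃ x ∈ A, ∃ y ∈ A, x ≠ y)
    (hfe : ∀ lam ∈ A, ∀ m : ℝ, 0 < m → lam * v (m / lam) = v m) :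
    ∀ μ : ℝ, 0 < μ → v μ = v 1 * μ := by
  obtain ⟨x, hx, y, hy, hxy⟩ : ∃ x ∈ A, ∃ y ∈ A, x < y := by
    obtain ⟨x, hx, y, hy, hne⟩ := hA3
    rcases lt_or_gt_of_ne hne with h | h
    · exact ⟨x, hx, y, hy, h⟩
    · exact ⟨y, hy, x, hx, h⟩
  have hx0 : 0 < x := hA1 hx
  have hA : ∀ lam ∈ A, ∀ m : ℝ, 0 < m → v (lam * m) = lam * v m := by
    intro lam hl m hm
    have hl0 : 0 < lam := hA1 hl
    have := hfe lam hl (lam * m) (by positivity)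
    rw [mul_div_cancel_left₀ m hl0.ne'] at this
    exact this.symm
  have hr : 1 < y / x := (one_lt_div hx0).2 hxy
  have hbase : ∀ t, 1 ≤ t → t ≤ y / x → ∀ m, 0 < m → v (t * m) = t * v m := by
    intro t h1 h2 m hm
    have htA : x * t ∈ A := hA2.ordConnected.out hx hy
      ⟨by nlinarith, by rw [le_div_iff₀ hx0] at h2; linarith⟩
    have e1 := hA _ htA m hm
    have e2 := hA x hx (t * m) (by positivity)
    rw [← mul_assoc, e1, mul_assoc] at e2
    exact (mul_left_cancel₀ hx0.ne' e2).symm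
  have hbig : ∀ t, 1 ≤ t → ∀ m, 0 < m → v (t * m) = t * v m := by
    intro t h1 m hm
    obtain ⟨n, hn⟩ := pow_unbounded_of_one_lt t hr
    exact homogeneous_of_le_pow hr hbase n t h1 hn.le m hm
  intro μ hμ
  rcases le_total 1 μ with h | h
  · have := hbig μ h 1 one_pos
    rw [mul_one] at this
    rw [this, mul_comm]
  · have := hbig μ⁻¹ ((one_le_inv₀ hμ).2 h) μ hμ
    rw [inv_mul_cancel₀ hμ.ne'] at this
    rw [this]
    field_simp
end

section
/- Let X be an ℕ-valued random variable, c > 0, and let N_1, N_2, … be i.i.d. geometric random variables with P(N_1 = k) = (1/(1+c))·(c/(1+c))^k for k ∈ ℕ (so E(N_1) = c), independent of X. Let Y = Σ_{i=1}^X N_i. Then for every t with -1 < t < 1/c such that E[(1−ct)^{−X}] < ∞, one has E[(1+t)^Y] = E[(1−ct)^{−X}]. Moreover, Y is infinitely dilatable: for every a > 0, the random variable Y_a = Σ_{i=1}^X N_i^{(a)}, with N_i^{(a)} i.i.d. geometric with mean ac independent of X, satisfies log E[(1+t)^{Y_a}] = log E[(1+at)^Y] for all t in a neighborhood of 0. 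-/
/-!
The generating function of a geometric variable with mean `c` is
`E[(1+t)^N] = (1 - c t)⁻¹` for `-1 < t < 1/c` (`hasSum_geomPMF`). Convolution powers of a pmf
correspond to powers of its generating function (`hasSum_convPow`), so interchanging the two
summations in `E[(1+t)^Y] = ∑ₓ ∑ₖ p k · P(N₁ + ⋯ + Nₖ = x) (1+t)^x` gives
`∑ₖ p k ((1 - c t)⁻¹)^k`. All terms are nonnegative because `1 + t ≥ 0`, so the interchange is
Tonelli's theorem in `ℝ≥0∞`. It needs no summability assumption: if one side diverges, so does the
other, and both real-valued `tsum`s take the junk value `0` (`tsum_compoundPMF_geomPMF`).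

For dilatability, both generating functions are evaluated by this identity: the mean `a c` at `t`
and the mean `c` at `a t` give the same base `(1 - a c t)⁻¹`. The radius `ε` only has to put `t` in
the range where both evaluations are legitimate.
-/

/-- The geometric pmf on `ℕ` with mean `c`: `P(N = k) = (1/(1+c))·(c/(1+c))^k`. -/
noncomputable def geomPMF (c : ℝ) (k : ℕ) : ℝ := (1 / (1 + c)) * (c / (1 + c)) ^ k

/-- The pmf of the sum of two independent `ℕ`-valued random variables (convolution). -/
noncomputable def convPMF (f g : ℕ → ℝ) (x : ℕ) : ℝ :=
  ∑ j ∈ Finset.range (x + 1), f j * g (x - j)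

/-- The `k`-fold convolution power of a pmf `f` (the law of `N_1 + ⋯ + N_k` for i.i.d. `N_i`). -/
noncomputable def convPow (f : ℕ → ℝ) : ℕ → ℕ → ℝ
  | 0 => fun x => if x = 0 then 1 else 0
  | k + 1 => convPMF (convPow f k) f

/-- The pmf of the compound sum `Y = Σ_{i=1}^X N_i`, where `X` has pmf `p` and the `N_i` are
i.i.d. with pmf `f`, independent of `X`. -/
noncomputable def compoundPMF (p f : ℕ → ℝ) (x : ℕ) : ℝ := ∑' k : ℕ, p k * convPow f k x

lemma convPow_nonneg {f : ℕ → ℝ} (hf : ∀ k, 0 ≤ f k) (n x : ℕ) : 0 ≤ convPow f n x := by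
  induction n generalizing x with
  | zero => simp only [convPow]; split_ifs <;> norm_num
  | succ n ih => simpa only [convPow, convPMF] using Finset.sum_nonneg fun j _ => mul_nonneg (ih j) (hf (x - j))

/-- The generating function of the `n`-fold convolution power is the `n`-th power of the
generating function. -/
lemma hasSum_convPow {f : ℕ → ℝ} {s G : ℝ}
    (h : HasSum (fun x => f x * s ^ x) G) (n : ℕ) :
    HasSum (fun x => convPow f n x * s ^ x) (G ^ n) := by
  induction n with
  | zero =>
    convert hasSum_ite_eq (0 : ℕ) (1 : ℝ) using 2 with x
    · by_cases hx : x = 0 <;> simp [convPow, hx]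
    · simp
  | succ n ih =>
    have h1 : Summable fun x => ‖convPow f n x * s ^ x‖ := ih.summable.norm
    have h2 : Summable fun x => ‖f x * s ^ x‖ := h.summable.norm
    have hS := (summable_norm_sum_mul_range_of_summable_norm h1 h2).of_norm
    have hT := tsum_mul_tsum_eq_tsum_sum_range_of_summable_norm h1 h2
    rw [ih.tsum_eq, h.tsum_eq, ← pow_succ] at hT
    have key := hS.hasSum
    rw [← hT] at key
    suffices h3 : (fun x => convPow f (n + 1) x * s ^ x) = fun x =>
        ∑ j ∈ Finset.range (x + 1), convPow f n j * s ^ j * (f (x - j) * s ^ (x - j)) by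
      rwa [h3]
    funext x
    simp only [convPow, convPMF, Finset.sum_mul]
    refine Finset.sum_congr rfl fun j hj => ?_
    have hjx : j + (x - j) = x := by have := Finset.mem_range.1 hj; omega
    conv_lhs => rw [← hjx, pow_add]
    rw [hjx]
    ring

lemma geomPMF_nonneg {c : ℝ} (hc : 0 < c) (k : ℕ) : 0 ≤ geomPMF c k := by
  unfold geomPMF; positivity

lemma hasSum_geomPMF {c : ℝ} (hc : 0 < c) {t : ℝ} (ht : -1 < t) (hct : c * t < 1) :
    HasSum (fun x => geomPMF c x * (1 + t) ^ x) (1 - c * t)⁻¹ := by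
  have h0 : 0 ≤ c / (1 + c) * (1 + t) := mul_nonneg (by positivity) (by linarith)
  have h1 : c / (1 + c) * (1 + t) < 1 := by
    rw [div_mul_eq_mul_div, div_lt_one (by positivity)]; linarith
  have h2 : 1 - c / (1 + c) * (1 + t) = (1 - c * t) / (1 + c) := by field_simp; ring
  have h3 : 1 - c * t ≠ 0 := by linarith
  have h4 : 1 + c ≠ 0 := by positivity
  have h5 : 1 / (1 + c) * (1 - c / (1 + c) * (1 + t))⁻¹ = (1 - c * t)⁻¹ := by
    rw [h2]; field_simp
  have key := (hasSum_geometric_of_lt_one h0 h1).mul_left (1 / (1 + c))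
  rw [h5] at key
  simpa only [geomPMF, mul_pow, mul_assoc] using key

lemma convPow_geomPMF_le_one {c : ℝ} (hc : 0 < c) (n x : ℕ) : convPow (geomPMF c) n x ≤ 1 := by
  have h := hasSum_convPow
    (hasSum_geomPMF hc (t := 0) (by norm_num) (by simp)) n
  simp only [add_zero, one_pow, mul_one, mul_zero, sub_zero, inv_one] at h
  exact le_hasSum h x fun j _ => convPow_nonneg (geomPMF_nonneg hc) n j

/-- The thinning identity as an equality of real `tsum`s, valid even when `E[(1 - c t)^{-X}]`
diverges, in which case both sides are `0`. -/
lemma tsum_compoundPMF_geomPMF {p : ℕ → ℝ} (hp0 : ∀ k, 0 ≤ p k) (hp1 : Summable p)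
    {c : ℝ} (hc : 0 < c) {t : ℝ} (ht : -1 < t) (hct : c * t < 1) :
    ∑' x : ℕ, compoundPMF p (geomPMF c) x * (1 + t) ^ x
      = ∑' k : ℕ, p k * ((1 - c * t)⁻¹) ^ k := by
  have hs : 0 ≤ 1 + t := by linarith
  have hq := convPow_nonneg (geomPMF_nonneg hc)
  have hterm : ∀ k x, 0 ≤ p k * convPow (geomPMF c) k x * (1 + t) ^ x := fun k x =>
    mul_nonneg (mul_nonneg (hp0 k) (hq k x)) (pow_nonneg hs x)
  have hsum : ∀ x, Summable fun k => p k * convPow (geomPMF c) k x := fun x =>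
    Summable.of_nonneg_of_le (fun k => mul_nonneg (hp0 k) (hq k x))
      (fun k => mul_le_of_le_one_right (hp0 k) (convPow_geomPMF_le_one hc k x)) hp1
  have hL : ∀ x, 0 ≤ compoundPMF p (geomPMF c) x * (1 + t) ^ x := fun x =>
    mul_nonneg (tsum_nonneg fun k => mul_nonneg (hp0 k) (hq k x)) (pow_nonneg hs x)
  have hR : ∀ k, 0 ≤ p k * ((1 - c * t)⁻¹) ^ k := fun k =>
    mul_nonneg (hp0 k) (pow_nonneg (inv_nonneg.2 (by linarith)) k)
  have hE : ∑' x, ENNReal.ofReal (compoundPMF p (geomPMF c) x * (1 + t) ^ x)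
      = ∑' k, ENNReal.ofReal (p k * ((1 - c * t)⁻¹) ^ k) := by
    calc _ = ∑' x, ∑' k, ENNReal.ofReal (p k * convPow (geomPMF c) k x * (1 + t) ^ x) := by
          refine tsum_congr fun x => ?_
          rw [compoundPMF, ← tsum_mul_right,
            ENNReal.ofReal_tsum_of_nonneg (fun k => hterm k x) ((hsum x).mul_right _)]
      _ = ∑' k, ∑' x, ENNReal.ofReal (p k * convPow (geomPMF c) k x * (1 + t) ^ x) :=
          ENNReal.tsum_comm
      _ = _ := by
          refine tsum_congr fun k => ?_
          have h := (hasSum_convPow (hasSum_geomPMF hc ht hct) k).mul_left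
            (p k)
          simp only [← mul_assoc] at h
          rw [← h.tsum_eq, ENNReal.ofReal_tsum_of_nonneg (hterm k) h.summable]
  -- `ENNReal.tsum_toReal_eq` also covers divergent sums, since `∞.toReal = 0`.
  have hreal := congrArg ENNReal.toReal hE
  rw [ENNReal.tsum_toReal_eq fun _ => ENNReal.ofReal_ne_top,
    ENNReal.tsum_toReal_eq fun _ => ENNReal.ofReal_ne_top] at hreal
  simpa only [ENNReal.toReal_ofReal (hL _), ENNReal.toReal_ofReal (hR _)] using hreal

/-- **Negative binomial thinning and its infinite dilatability.**
Let `X` be `ℕ`-valued with pmf `p`, `c > 0`, and let `Y = Σ_{i=1}^X N_i` with `N_i` i.i.d.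
geometric with mean `c` (pmf `(1/(1+c))(c/(1+c))^k`), independent of `X`. Then for every
`-1 < t < 1/c` with `E[(1-ct)^{-X}] < ∞`, `E[(1+t)^Y] = E[(1-ct)^{-X}]`. Moreover `Y` is
infinitely dilatable: for every `a > 0`, the compound `Y_a = Σ_{i=1}^X N_i^{(a)}` with
`N_i^{(a)}` i.i.d. geometric of mean `ac` independent of `X` satisfies
`log E[(1+t)^{Y_a}] = log E[(1+at)^Y]` for all `t` near `0`. -/
theorem negative_binomial_thinning_fcgf_and_dilatable
    (p : ℕ → ℝ) (hp0 : ∀ k, 0 ≤ p k) (hp1 : HasSum p 1)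
    (c : ℝ) (hc : 0 < c) :
    (∀ t : ℝ, -1 < t → t < 1 / c →
      Summable (fun k : ℕ => p k * ((1 - c * t)⁻¹) ^ k) →
      ∑' x : ℕ, compoundPMF p (geomPMF c) x * (1 + t) ^ x
        = ∑' k : ℕ, p k * ((1 - c * t)⁻¹) ^ k) ∧
    (∀ a : ℝ, 0 < a → ∃ ε > 0, ∀ t : ℝ, |t| < ε →
      Real.log (∑' x : ℕ, compoundPMF p (geomPMF (a * c)) x * (1 + t) ^ x)
        = Real.log (∑' x : ℕ, compoundPMF p (geomPMF c) x * (1 + a * t) ^ x)) := by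
  refine ⟨fun t ht htc _ => ?_, fun a ha => ?_⟩
  · exact tsum_compoundPMF_geomPMF hp0 hp1.summable hc ht
      (by rwa [lt_div_iff₀ hc, mul_comm] at htc)
  · -- This radius forces `|t| < 1`, `|a t| < 1` and `|a c t| < 1`.
    refine ⟨1 / (1 + a + a * c), by positivity, fun t ht => ?_⟩
    have hac : 0 < a * c := mul_pos ha hc
    rw [lt_div_iff₀ (by positivity)] at ht
    have h0 := abs_nonneg t
    have h1 : 0 ≤ |t| * a := by positivity
    have h2 : 0 ≤ |t| * (a * c) := by positivity
    have h3 : -|t| ≤ t := neg_abs_le t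
    have h4 : a * -|t| ≤ a * t := mul_le_mul_of_nonneg_left h3 ha.le
    have h5 : a * c * t ≤ a * c * |t| := mul_le_mul_of_nonneg_left (le_abs_self t) hac.le
    rw [tsum_compoundPMF_geomPMF hp0 hp1.summable hac (by linarith) (by linarith),
      tsum_compoundPMF_geomPMF hp0 hp1.summable hc (by linarith) (by linarith),
      show c * (a * t) = a * c * t by ring]
end

section
/- Let X_1, X_2, … be i.i.d. ℕ^k-valued random vectors with multivariate FCGF C(t) = log E[(1+t_1)^{X_1^{(1)}} ⋯ (1+t_k)^{X_1^{(k)}}] finite on a neighborhood of 0 ∈ ℝ^k, mean vector m = E(X_1) with m > 0 componentwise, and dispersion matrix Σ = Cov(X_1) − diag(m). Then for every μ ∈ ℝ^k and every t in a sufficiently small neighborhood of 0, n·C(n^{-1/2} t) − n^{1/2} mᵀt + μᵀt → μᵀt + (1/2) tᵀΣt as n → ∞; that is, the FCGF of the translated standardized variable Z_n(μ) = (nI)^{-1/2}·[S_n ⊖ (nm − n^{1/2}μ)] converges pointwise to the FCGF μᵀt + (1/2)tᵀΣt of the multivariate Hermite distribution with mean vector μ and dispersion matrix Σ. -/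
/-! Along a fixed direction `t` with `|t j| < ε`, put `G x = ∑ₛ p s ∏ⱼ (1 + x tⱼ) ^ sⱼ`. Each summand
is a polynomial in `x` with constant coefficient `1`, linear coefficient `u = ∑ⱼ sⱼ tⱼ` and quadratic
coefficient `(u² - ∑ⱼ sⱼ tⱼ²) / 2`, and all its coefficients are bounded by those of
`∏ⱼ (1 + x |tⱼ|) ^ sⱼ`. Hence for `|x| ≤ 1` the cubic Taylor remainder of a summand is at most
`|x|³ ∏ⱼ (1 + |tⱼ|) ^ sⱼ` (`IsMajorized.abs_eval_sub_le`), which is summable against `p` by the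
finiteness hypothesis. Summing over `s` gives `G x = 1 + a x + b x² + O(x³)` with `a = ∑ⱼ mⱼ tⱼ` and
`2 b = E (∑ⱼ tⱼ Xⱼ)² - ∑ⱼ mⱼ tⱼ²`. Taking `x = n^{-1/2}`, the second-order expansion of the
logarithm (`tendsto_mul_log_of_expansion`) yields the limit `b - a² / 2`, and
`2 b - a² = tᵀ Σ t`. -/

open Filter

open Polynomial in
/-- `P = 1 + u x + ((u² - v) / 2) x² + ⋯`, and the coefficients of `P` are bounded in absolute value
by those of `Q`. The quadratic coefficient is recorded through `v = u² - 2 c₂` because `u` and `v`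
(the first two power sums of the negated inverse roots of `P`) are additive under
multiplication. -/
structure IsMajorized (P Q : ℝ[X]) (u v : ℝ) : Prop where
  coeff_zero : P.coeff 0 = 1
  coeff_one : P.coeff 1 = u
  coeff_two : u ^ 2 - 2 * P.coeff 2 = v
  abs_coeff_le : ∀ i, |P.coeff i| ≤ Q.coeff i

namespace IsMajorized

open Polynomial

lemma one : IsMajorized 1 1 0 0 where
  coeff_zero := by simp
  coeff_one := by simp [Polynomial.coeff_one]
  coeff_two := by simp [Polynomial.coeff_one]
  abs_coeff_le i := by
    rw [Polynomial.coeff_one]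
    split_ifs <;> simp

lemma linear (t : ℝ) : IsMajorized (1 + C t * X) (1 + C |t| * X) t (t ^ 2) where
  coeff_zero := by simp
  coeff_one := by simp [Polynomial.coeff_one]
  coeff_two := by simp [Polynomial.coeff_one]
  abs_coeff_le i := by
    rcases i with _ | _ | i <;> simp [Polynomial.coeff_one, Polynomial.coeff_X]

lemma mul {P Q P' Q' : ℝ[X]} {u v u' v' : ℝ} (h : IsMajorized P Q u v)
    (h' : IsMajorized P' Q' u' v') : IsMajorized (P * P') (Q * Q') (u + u') (v + v') where
  coeff_zero := by simp [mul_coeff_zero, h.coeff_zero, h'.coeff_zero]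
  coeff_one := by
    simp [mul_coeff_one, h.coeff_zero, h'.coeff_zero, h.coeff_one, h'.coeff_one]; ring
  coeff_two := by
    have e : (P * P').coeff 2 = P'.coeff 2 + u * u' + P.coeff 2 := by
      rw [Polynomial.coeff_mul, Finset.Nat.sum_antidiagonal_eq_sum_range_succ_mk]
      simp [Finset.sum_range_succ, h.coeff_zero, h'.coeff_zero, h.coeff_one, h'.coeff_one]
    rw [e, ← h.coeff_two, ← h'.coeff_two]; ring
  abs_coeff_le i := by
    rw [Polynomial.coeff_mul, Polynomial.coeff_mul]
    refine (Finset.abs_sum_le_sum_abs _ _).trans (Finset.sum_le_sum fun x _ => ?_)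
    rw [abs_mul]
    exact mul_le_mul (h.abs_coeff_le _) (h'.abs_coeff_le _) (abs_nonneg _)
      ((abs_nonneg _).trans (h.abs_coeff_le _))

lemma pow {P Q : ℝ[X]} {u v : ℝ} (h : IsMajorized P Q u v) (n : ℕ) :
    IsMajorized (P ^ n) (Q ^ n) (n * u) (n * v) := by
  induction n with
  | zero => simpa using one
  | succ n ih =>
    have := ih.mul h
    simpa [pow_succ, add_mul] using this

lemma prod {ι : Type*} (S : Finset ι) {P Q : ι → ℝ[X]} {u v : ι → ℝ}
    (h : ∀ i, IsMajorized (P i) (Q i) (u i) (v i)) :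
    IsMajorized (∏ i ∈ S, P i) (∏ i ∈ S, Q i) (∑ i ∈ S, u i) (∑ i ∈ S, v i) := by
  classical
  induction S using Finset.induction_on with
  | empty => simpa using one
  | insert a S ha ih =>
    rw [Finset.prod_insert ha, Finset.prod_insert ha, Finset.sum_insert ha, Finset.sum_insert ha]
    exact (h a).mul ih

/-- The cubic Taylor remainder of `P` on `[-1, 1]` is controlled by the value of its majorant
at `1`. -/
lemma abs_eval_sub_le {P Q : ℝ[X]} {u v : ℝ} (h : IsMajorized P Q u v) {x : ℝ} (hx : |x| ≤ 1) :
    |P.eval x - (1 + u * x + (u ^ 2 - v) / 2 * x ^ 2)| ≤ |x| ^ 3 * Q.eval 1 := by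
  set M := max P.natDegree Q.natDegree with hM
  have hQ0 : ∀ i, 0 ≤ Q.coeff i := fun i => (abs_nonneg _).trans (h.abs_coeff_le i)
  have eP : P.eval x - (1 + u * x + (u ^ 2 - v) / 2 * x ^ 2)
      = ∑ i ∈ Finset.range (M + 1), P.coeff (i + 3) * x ^ (i + 3) := by
    rw [eval_eq_sum_range' (n := M + 1 + 1 + 1 + 1) (by omega), Finset.sum_range_succ',
      Finset.sum_range_succ', Finset.sum_range_succ']
    have h2 : P.coeff 2 = (u ^ 2 - v) / 2 := by rw [← h.coeff_two]; ring
    simp [h.coeff_zero, h.coeff_one, h2]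
    ring
  have eQ : ∑ i ∈ Finset.range (M + 1), Q.coeff (i + 3) ≤ Q.eval 1 := by
    have e : Q.eval 1 = ∑ i ∈ Finset.range (M + 1), Q.coeff (i + 3)
        + Q.coeff 2 + Q.coeff 1 + Q.coeff 0 := by
      rw [eval_eq_sum_range' (n := M + 1 + 1 + 1 + 1) (by omega), Finset.sum_range_succ',
        Finset.sum_range_succ', Finset.sum_range_succ']
      simp only [one_pow, mul_one]
    have := hQ0 0
    have := hQ0 1
    have := hQ0 2
    linarith
  rw [eP]
  refine (Finset.abs_sum_le_sum_abs _ _).trans ?_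
  refine le_trans ?_ (mul_le_mul_of_nonneg_left eQ (by positivity))
  rw [Finset.mul_sum]
  refine Finset.sum_le_sum fun i _ => ?_
  rw [abs_mul, abs_pow, mul_comm]
  exact mul_le_mul (pow_le_pow_of_le_one (abs_nonneg _) hx (by omega)) (h.abs_coeff_le _)
    (abs_nonneg _) (by positivity)

end IsMajorized

/-- Cubic remainder bound for `x ↦ ∏ⱼ (1 + x tⱼ) ^ sⱼ`. -/
lemma abs_prod_sub_le {k : ℕ} (t : Fin k → ℝ) (s : Fin k → ℕ) {x : ℝ} (hx : |x| ≤ 1) :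
    |∏ j, (1 + t j * x) ^ s j - (1 + (∑ j, s j * t j) * x
      + ((∑ j, s j * t j) ^ 2 - ∑ j, s j * t j ^ 2) / 2 * x ^ 2)|
      ≤ |x| ^ 3 * ∏ j, (1 + |t j|) ^ s j := by
  have := (IsMajorized.prod Finset.univ
    (fun j => (IsMajorized.linear (t j)).pow (s j))).abs_eval_sub_le hx
  simpa [Polynomial.eval_prod] using this

/-- Second moments are finite: with `1 + δ' = (1 + δ)²`, Bernoulli's inequality gives
`∏ⱼ (1 + δ') ^ sⱼ = ((1 + δ) ^ (∑ⱼ sⱼ))² ≥ δ² sᵢ sⱼ`. -/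
lemma summable_second_moment {k : ℕ} {p : (Fin k → ℕ) → ℝ} (hp0 : ∀ s, 0 ≤ p s)
    {ε : ℝ} (hε : 0 < ε)
    (hfin : ∀ t : Fin k → ℝ, (∀ j, |t j| < ε) →
      Summable (fun s : Fin k → ℕ => p s * ∏ j, (1 + t j) ^ (s j))) (i j : Fin k) :
    Summable (fun s : Fin k → ℕ => p s * (s i : ℝ) * (s j : ℝ)) := by
  obtain ⟨δ, hδ, hδ1, hδε⟩ : ∃ δ : ℝ, 0 < δ ∧ δ ≤ 1 ∧ 4 * δ ≤ ε :=
    ⟨min 1 (ε / 4), by positivity, min_le_left _ _, by linarith [min_le_right 1 (ε / 4)]⟩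
  have hsum := (hfin (fun _ => 2 * δ + δ ^ 2) (fun _ => by
    rw [abs_of_pos (by positivity)]; nlinarith)).mul_left (1 / δ ^ 2)
  refine hsum.of_nonneg_of_le (fun s => by have := hp0 s; positivity) fun s => ?_
  have e : ∏ j, (1 + (2 * δ + δ ^ 2)) ^ s j = ((1 + δ) ^ (∑ j, s j)) ^ 2 := by
    rw [Finset.prod_pow_eq_pow_sum, pow_right_comm]; congr 1; ring
  have key : ∀ i, δ * (s i : ℝ) ≤ (1 + δ) ^ (∑ j, s j) := fun i => by
    have h1 : (s i : ℝ) ≤ ((∑ j, s j : ℕ) : ℝ) := by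
      exact_mod_cast Finset.single_le_sum (f := s) (fun _ _ => Nat.zero_le _) (Finset.mem_univ i)
    have h2 := one_add_mul_le_pow (a := δ) (by linarith) (∑ j, s j)
    nlinarith
  rw [e]
  have h3 : δ * (s i : ℝ) * (δ * s j) ≤ ((1 + δ) ^ (∑ j, s j)) ^ 2 := by
    rw [sq]; exact mul_le_mul (key i) (key j) (by positivity) (by positivity)
  calc p s * (s i : ℝ) * s j = 1 / δ ^ 2 * (p s * (δ * (s i : ℝ) * (δ * s j))) := by
        field_simp
    _ ≤ _ := by
        have := hp0 s
        gcongr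

/-- If `G x = 1 + a x + b x² + O(x³)` as `x → 0`, then `n log G(n^{-1/2}) - n^{1/2} a` tends to
`b - a² / 2`. -/
lemma tendsto_mul_log_of_expansion {G : ℝ → ℝ} {a b K : ℝ}
    (hG : ∀ x, |x| ≤ 1 → |G x - (1 + a * x + b * x ^ 2)| ≤ |x| ^ 3 * K) :
    Tendsto (fun n : ℕ => (n : ℝ) * Real.log (G (Real.sqrt n)⁻¹) - Real.sqrt n * a) atTop
      (nhds (b - a ^ 2 / 2)) := by
  set x : ℕ → ℝ := fun n => (Real.sqrt n)⁻¹ with hx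
  have hx0 : Tendsto x atTop (nhds 0) :=
    tendsto_inv_atTop_zero.comp (Real.tendsto_sqrt_atTop.comp tendsto_natCast_atTop_atTop)
  have hxpos : ∀ n : ℕ, 1 ≤ n → 0 < x n ∧ x n ≤ 1 := fun n hn => by
    have : 1 ≤ Real.sqrt n := Real.one_le_sqrt.2 (by exact_mod_cast hn)
    exact ⟨by positivity, inv_le_one_of_one_le₀ this⟩
  set y : ℕ → ℝ := fun n => G (x n) - 1 with hy
  set v : ℕ → ℝ := fun n => (y n - a * x n) / x n ^ 2 with hv
  have hvb : Tendsto v atTop (nhds b) := by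
    rw [tendsto_iff_norm_sub_tendsto_zero]
    refine squeeze_zero' (Eventually.of_forall fun _ => norm_nonneg _) ?_
      (by simpa using hx0.mul_const K)
    filter_upwards [eventually_ge_atTop 1] with n hn
    obtain ⟨h0, h1⟩ := hxpos n hn
    have := hG (x n) (by rwa [abs_of_pos h0])
    rw [abs_of_pos h0] at this
    have e : v n - b = (G (x n) - (1 + a * x n + b * x n ^ 2)) / x n ^ 2 := by
      simp only [hv, hy]; field_simp; ring
    rw [Real.norm_eq_abs, e, abs_div, abs_of_pos (by positivity : 0 < x n ^ 2),
      div_le_iff₀ (by positivity)]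
    linarith
  set w : ℕ → ℝ := fun n => a + x n * v n with hw
  have hwa : Tendsto w atTop (nhds a) := by simpa using (hx0.mul hvb).const_add a
  have hyw : ∀ n, 1 ≤ n → y n = x n * w n := fun n hn => by
    have := (hxpos n hn).1.ne'
    simp only [hw, hv]; field_simp; ring
  have hy0 : Tendsto (fun n => x n * w n) atTop (nhds 0) := by simpa using hx0.mul hwa
  -- the error of the quadratic Taylor polynomial of `log (1 + ·)`, scaled by `n = x⁻²`
  set L : ℕ → ℝ := fun n => (Real.log (1 + y n) - y n + y n ^ 2 / 2) / x n ^ 2 with hL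
  have hL0 : Tendsto L atTop (nhds 0) := by
    rw [tendsto_zero_iff_norm_tendsto_zero]
    have hlim : Tendsto (fun n => 2 * (x n * |w n| ^ 3)) atTop (nhds 0) := by
      simpa using (hx0.mul (hwa.abs.pow 3)).const_mul 2
    refine squeeze_zero' (Eventually.of_forall fun _ => norm_nonneg _) ?_ hlim
    have hsmall : ∀ᶠ n in atTop, |x n * w n| < 1 / 2 := by
      have := hy0.abs
      rw [abs_zero] at this
      exact this.eventually_lt_const (by norm_num)
    filter_upwards [eventually_ge_atTop 1, hsmall] with n hn hs
    obtain ⟨h0, h1⟩ := hxpos n hn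
    rw [← hyw n hn] at hs
    have := Real.abs_log_sub_add_sum_range_le (x := -y n) (by rw [abs_neg]; linarith) 2
    rw [abs_neg] at this
    have hb : |Real.log (1 + y n) - y n + y n ^ 2 / 2| ≤ 2 * |y n| ^ 3 := by
      have e : ∑ i ∈ Finset.range 2, (-y n) ^ (i + 1) / ((i : ℝ) + 1) + Real.log (1 - -y n)
          = Real.log (1 + y n) - y n + y n ^ 2 / 2 := by
        simp [Finset.sum_range_succ]; ring
      rw [e] at this
      refine this.trans ?_
      rw [div_le_iff₀ (by linarith)]
      have h3 : 0 ≤ |y n| ^ 3 := by positivity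
      norm_num
      nlinarith
    rw [Real.norm_eq_abs, hL, abs_div, abs_of_pos (by positivity : 0 < x n ^ 2),
      div_le_iff₀ (by positivity)]
    refine hb.trans (le_of_eq ?_)
    rw [hyw n hn, abs_mul, abs_of_pos h0]; ring
  have hfinal : Tendsto (fun n => v n - w n ^ 2 / 2 + L n) atTop (nhds (b - a ^ 2 / 2)) := by
    simpa using (hvb.sub ((hwa.pow 2).div_const 2)).add hL0
  refine hfinal.congr' ?_
  filter_upwards [eventually_ge_atTop 1] with n hn
  have h0 := (hxpos n hn).1
  have e1 : Real.sqrt n = 1 / x n := by simp [hx]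
  have e2 : (n : ℝ) = 1 / x n ^ 2 := by simp [hx]
  have e3 : w n ^ 2 = y n ^ 2 / x n ^ 2 := by rw [hyw n hn]; field_simp
  have e4 : G (x n) = 1 + y n := by simp [hy]
  change _ = (n : ℝ) * Real.log (G (x n)) - Real.sqrt n * a
  rw [e1, e2, e3, e4]
  simp only [hv, hL]
  field_simp
  ring

/-- **Multivariate Hermite convergence of FCGFs.**
Let `X_1, X_2, …` be i.i.d. `ℕ^k`-valued random vectors with common pmf `p`, multivariate
FCGF `C(t) = log E[∏_j (1+t_j)^{X_1^{(j)}}]` finite near `0`, mean vector `m > 0` and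
dispersion matrix `Σ = Cov(X_1) − diag(m)`. Then for every `μ ∈ ℝ^k` and every `t` in a
sufficiently small neighborhood of `0`,
`n·C(n^{-1/2} t) − n^{1/2} mᵀt + μᵀt → μᵀt + (1/2) tᵀΣt` as `n → ∞`; i.e. the FCGF of the
translated standardized variable `Z_n(μ) = (nI)^{-1/2}·[S_n ⊖ (nm − n^{1/2}μ)]` converges
pointwise to the FCGF of the multivariate Hermite distribution with mean `μ` and
dispersion matrix `Σ`. -/
theorem multivariate_hermite_fcgf_convergence
    (k : ℕ) (p : (Fin k → ℕ) → ℝ)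
    (hp0 : ∀ s, 0 ≤ p s) (hp1 : HasSum p 1)
    (ε : ℝ) (hε : 0 < ε)
    (hfin : ∀ t : Fin k → ℝ, (∀ j, |t j| < ε) →
      Summable (fun s : Fin k → ℕ => p s * ∏ j, (1 + t j) ^ (s j)))
    (m : Fin k → ℝ) (hm : ∀ j, 0 < m j)
    (hmean : ∀ j, HasSum (fun s : Fin k → ℕ => p s * (s j : ℝ)) (m j))
    (Smat : Fin k → Fin k → ℝ)
    (hS : ∀ i j, Smat i j
      = ((∑' s : Fin k → ℕ, p s * (s i : ℝ) * (s j : ℝ)) - m i * m j)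
          - (if i = j then m i else 0)) :
    ∀ μ : Fin k → ℝ, ∃ ε' > 0, ∀ t : Fin k → ℝ, (∀ j, |t j| < ε') →
      Tendsto
        (fun n : ℕ =>
          (n : ℝ) * Real.log (∑' s : Fin k → ℕ, p s * ∏ j, (1 + t j / Real.sqrt n) ^ (s j))
            - Real.sqrt n * (∑ j, m j * t j) + (∑ j, μ j * t j))
        atTop
        (nhds ((∑ j, μ j * t j) + (1 / 2) * ∑ i, ∑ j, t i * Smat i j * t j)) := by
  intro μ
  refine ⟨ε, hε, fun t ht => ?_⟩
  have hM : Summable (fun s : Fin k → ℕ => p s * ∏ j, (1 + |t j|) ^ s j) :=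
    hfin (fun j => |t j|) (fun j => by rw [abs_abs]; exact ht j)
  set a : ℝ := ∑ j, m j * t j with ha
  set E : Fin k → Fin k → ℝ := fun i j => ∑' s : Fin k → ℕ, p s * (s i : ℝ) * (s j : ℝ) with hE
  set b : ℝ := (∑ i, ∑ j, t i * E i j * t j - ∑ j, m j * t j ^ 2) / 2 with hb
  have h1 : HasSum (fun s : Fin k → ℕ => p s * ∑ j, s j * t j) a := by
    have := hasSum_sum (s := Finset.univ) fun j _ => (hmean j).mul_right (t j)
    refine this.congr_fun fun s => ?_
    rw [Finset.mul_sum]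
    exact Finset.sum_congr rfl fun j _ => by ring
  have h2 : HasSum (fun s : Fin k → ℕ => p s * ∑ j, s j * t j ^ 2) (∑ j, m j * t j ^ 2) := by
    have := hasSum_sum (s := Finset.univ) fun j _ => (hmean j).mul_right (t j ^ 2)
    refine this.congr_fun fun s => ?_
    rw [Finset.mul_sum]
    exact Finset.sum_congr rfl fun j _ => by ring
  have h3 : HasSum (fun s : Fin k → ℕ => p s * (∑ j, s j * t j) ^ 2)
      (∑ i, ∑ j, t i * E i j * t j) := by
    have := hasSum_sum (s := Finset.univ) fun i _ => hasSum_sum (s := Finset.univ) fun j _ =>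
      ((summable_second_moment hp0 hε hfin i j).hasSum.mul_left (t i)).mul_right (t j)
    refine this.congr_fun fun s => ?_
    rw [sq, Finset.sum_mul_sum, Finset.mul_sum]
    refine Finset.sum_congr rfl fun i _ => ?_
    rw [Finset.mul_sum]
    exact Finset.sum_congr rfl fun j _ => by ring
  have hG : ∀ x : ℝ, |x| ≤ 1 →
      |(∑' s : Fin k → ℕ, p s * ∏ j, (1 + t j * x) ^ s j) - (1 + a * x + b * x ^ 2)|
        ≤ |x| ^ 3 * ∑' s : Fin k → ℕ, p s * ∏ j, (1 + |t j|) ^ s j := by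
    intro x hx
    have hpoly : HasSum (fun s : Fin k → ℕ => p s * (1 + (∑ j, s j * t j) * x
        + ((∑ j, s j * t j) ^ 2 - ∑ j, s j * t j ^ 2) / 2 * x ^ 2)) (1 + a * x + b * x ^ 2) := by
      have := (hp1.add (h1.mul_right x)).add (((h3.sub h2).div_const 2).mul_right (x ^ 2))
      exact this.congr_fun fun s => by ring
    have hle : ∀ s : Fin k → ℕ, ‖p s * (∏ j, (1 + t j * x) ^ s j - (1 + (∑ j, s j * t j) * x
        + ((∑ j, s j * t j) ^ 2 - ∑ j, s j * t j ^ 2) / 2 * x ^ 2))‖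
        ≤ |x| ^ 3 * (p s * ∏ j, (1 + |t j|) ^ s j) := fun s => by
      rw [Real.norm_eq_abs, abs_mul, abs_of_nonneg (hp0 s), mul_left_comm]
      exact mul_le_mul_of_nonneg_left (abs_prod_sub_le t s hx) (hp0 s)
    have hrem : Summable _ := Summable.of_norm_bounded (hM.mul_left (|x| ^ 3)) hle
    have hprod : HasSum (fun s : Fin k → ℕ => p s * ∏ j, (1 + t j * x) ^ s j) _ :=
      (hrem.hasSum.add hpoly).congr_fun fun s => by ring
    rw [hprod.tsum_eq, add_sub_cancel_right, ← tsum_mul_left]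
    exact tsum_of_norm_bounded (hM.mul_left (|x| ^ 3)).hasSum hle
  have hlim := (tendsto_mul_log_of_expansion hG).add_const (∑ j, μ j * t j)
  have hquad : b - a ^ 2 / 2 = (1 / 2) * ∑ i, ∑ j, t i * Smat i j * t j := by
    have e : ∑ i, ∑ j, t i * Smat i j * t j
        = ∑ i, ∑ j, t i * E i j * t j - a ^ 2 - ∑ j, m j * t j ^ 2 := by
      rw [ha, sq, Finset.sum_mul_sum, ← Finset.sum_sub_distrib, ← Finset.sum_sub_distrib]
      refine Finset.sum_congr rfl fun i _ => ?_
      have ed : m i * t i ^ 2 = ∑ j, if i = j then t i * m i * t j else 0 := by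
        rw [Finset.sum_ite_eq]; simp; ring
      rw [ed, ← Finset.sum_sub_distrib, ← Finset.sum_sub_distrib]
      refine Finset.sum_congr rfl fun j _ => ?_
      rw [hS i j]
      split_ifs <;> simp only [hE] <;> ring
    rw [e, hb]; ring
  rw [hquad, add_comm] at hlim
  simpa only [div_eq_mul_inv] using hlim
end
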